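/- arXiv:1104.0195 — 7 statements merged into one kernel-verified Lean document; each statement's English description precedes it below -/
import Mathlib

section
/- For every closed term M of Λ⊕, the judgment M ⇓div,n (1 − Σ⟦M⟧n) holds: the probability 1 minus the total mass of the call-by-name small-step semantics of M is a derivable call-by-name divergence probability for M. -/
open scoped ENNReal

/-- Terms of Λ⊕ (and of Λ⊕⁺), in de Bruijn notation: variables, abstractions,
applications and binary (probabilistic) sums.  De Bruijn indices realize
"terms up to renaming of bound variables". -/
inductive Term : Type
  | var : ℕ → Term
  | lam : Term → Term
  | app : Term → Term → Term
  | choice : Term → Term → Term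
  deriving DecidableEq

namespace Term

/-- Values: variables and abstractions. -/
inductive IsValue : Term → Prop
  | var (n : ℕ) : IsValue (var n)
  | lam (M : Term) : IsValue (lam M)

/-- Boolean value test. -/
def isVal : Term → Bool
  | var _ => true
  | lam _ => true
  | _ => false

/-- Shifting of de Bruijn indices: add `d` to all indices `≥ c`. -/
def shift (d c : ℕ) : Term → Term
  | var n => if n < c then var n else var (n + d)
  | lam M => lam (shift d (c + 1) M)
  | app M N => app (shift d c M) (shift d c N)
  | choice M N => choice (shift d c M) (shift d c N)

/-- Capture-avoiding substitution `M[j := N]` (the variable `j` is consumed and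
higher indices are decremented, as in a β-step). -/
def subst : Term → ℕ → Term → Term
  | var n, j, N => if n = j then shift j 0 N else if j < n then var (n - 1) else var n
  | lam M, j, N => lam (subst M (j + 1) N)
  | app M L, j, N => app (subst M j N) (subst L j N)
  | choice M L, j, N => choice (subst M j N) (subst L j N)

/-- All free indices are `< n`. -/
def closedUnder : Term → ℕ → Prop
  | var m, n => m < n
  | lam M, n => closedUnder M (n + 1)
  | app M N, n => closedUnder M n ∧ closedUnder N n
  | choice M N, n => closedUnder M n ∧ closedUnder N n

/-- Closed terms: no free variables. -/
def Closed (M : Term) : Prop := closedUnder M 0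

end Term

/-- (Sub)distributions are represented as functions from terms into `ℝ≥0∞`;
genuine distributions (`IsDist`) are supported on values and have mass `≤ 1`. -/
abbrev PDist := Term → ℝ≥0∞

/-- The sum (total mass) `Σ𝒟` of a distribution. -/
noncomputable def dsum (D : PDist) : ℝ≥0∞ := ∑' M, D M

/-- The support of a distribution. -/
def dsupp (D : PDist) : Set Term := {M | D M ≠ 0}

/-- The everywhere-zero distribution `∅`. -/
noncomputable def dzero : PDist := fun _ => 0

/-- The Dirac distribution `{V^1}`. -/
noncomputable def dirac (V : Term) : PDist := fun M => if M = V then 1 else 0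

/-- Being a genuine (sub)probability distribution: supported on values, with
total mass at most one. -/
def IsDist (D : PDist) : Prop := (∀ M, D M ≠ 0 → M.IsValue) ∧ dsum D ≤ 1

/-- Call-by-value reduction `↦v`, relating a term to the (equiprobable) finite
sequence of its possible reducts. -/
inductive RedV : Term → List Term → Prop
  | beta {M V : Term} : V.IsValue → RedV (.app (.lam M) V) [M.subst 0 V]
  | choice {V W : Term} : V.IsValue → W.IsValue → RedV (.choice V W) [V, W]
  | appL {M N : Term} {Ls : List Term} :
      RedV M Ls → RedV (.app M N) (Ls.map (fun L => .app L N))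
  | appR {V M : Term} {Ns : List Term} :
      V.IsValue → RedV M Ns → RedV (.app V M) (Ns.map (fun L => .app V L))
  | choiceL {M N : Term} {Ls : List Term} :
      RedV M Ls → RedV (.choice M N) (Ls.map (fun L => .choice L N))
  | choiceR {V M : Term} {Ns : List Term} :
      V.IsValue → RedV M Ns → RedV (.choice V M) (Ns.map (fun L => .choice V L))

/-- Call-by-name reduction `↦n`. -/
inductive RedN : Term → List Term → Prop
  | beta {M N : Term} : RedN (.app (.lam M) N) [M.subst 0 N]
  | choice {M N : Term} : RedN (.choice M N) [M, N]
  | appL {M N : Term} {Ls : List Term} :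
      RedN M Ls → RedN (.app M N) (Ls.map (fun L => .app L N))

/-- The inductive small-step convergence relation `⇒`, parametric in the
underlying reduction relation: any term evaluates to `∅`; a value `V`
evaluates to `{V^1}`; and if `M ↦ N₁,…,Nₙ` and `Nᵢ ⇒ 𝒟ᵢ` then
`M ⇒ Σᵢ (1/n)𝒟ᵢ`. -/
inductive Conv (Red : Term → List Term → Prop) : Term → PDist → Prop
  | bot (M : Term) : Conv Red M dzero
  | val {V : Term} : V.IsValue → Conv Red V (dirac V)
  | step {M : Term} {Ns : List Term} (Ds : Fin Ns.length → PDist) :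
      Red M Ns → (∀ i, Conv Red (Ns.get i) (Ds i)) →
      Conv Red M (fun W => (∑ i, Ds i W) / (Ns.length : ℝ≥0∞))

/-- Call-by-value small-step convergence `⇒v`. -/
def SmallV : Term → PDist → Prop := Conv RedV

/-- Call-by-name small-step convergence `⇒n`. -/
def SmallN : Term → PDist → Prop := Conv RedN

/-- The small-step semantics `⟦M⟧`: the pointwise supremum of all distributions
derivable for `M`. -/
noncomputable def semOf (S : Term → PDist → Prop) (M : Term) : PDist :=
  fun W => ⨆ (D : PDist) (_ : S M D), D W

/-- Call-by-value small-step semantics `⟦M⟧v`. -/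
noncomputable def semV : Term → PDist := semOf SmallV

/-- Call-by-name small-step semantics `⟦M⟧n`. -/
noncomputable def semN : Term → PDist := semOf SmallN

/-- One-step unfolding of the divergence inference system: a value diverges
with probability `0`; if `M ↦ N₁,…,Nₙ` and `Nᵢ` diverges with probability
`pᵢ`, then `M` diverges with probability `Σᵢ (1/n)pᵢ`. -/
def DivStep (Red : Term → List Term → Prop) (R : Term → ℝ≥0∞ → Prop)
    (M : Term) (p : ℝ≥0∞) : Prop :=
  (M.IsValue ∧ p = 0) ∨
    ∃ (Ns : List Term) (ps : Fin Ns.length → ℝ≥0∞),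
      Red M Ns ∧ (∀ i, R (Ns.get i) (ps i)) ∧ p = (∑ i, ps i) / (Ns.length : ℝ≥0∞)

/-- The coinductively-defined divergence relation `⇓div`: the union of all
consistent relations between terms and probabilities in `[0,1]`. -/
def Diverges (Red : Term → List Term → Prop) (M : Term) (p : ℝ≥0∞) : Prop :=
  ∃ R : Term → ℝ≥0∞ → Prop,
    (∀ N q, R N q → q ≤ 1 ∧ DivStep Red R N q) ∧ R M p

/-- Call-by-value divergence `⇓div`. -/
def DivV : Term → ℝ≥0∞ → Prop := Diverges RedV

/-- Call-by-name divergence `⇓div,n`. -/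
def DivN : Term → ℝ≥0∞ → Prop := Diverges RedN

/-- One-step unfolding of the call-by-value big-step inference system. -/
def BigVStep (R : Term → PDist → Prop) (M : Term) (D : PDist) : Prop :=
  (M.IsValue ∧ D = dirac M) ∨
  (∃ (N L : Term) (E F : PDist) (G : Term → Term → PDist),
      M = .app N L ∧ R N E ∧ R L F ∧
      (∀ P V, E (.lam P) ≠ 0 → V.IsValue → F V ≠ 0 → R (P.subst 0 V) (G P V)) ∧
      D = fun W => ∑' (P : Term), ∑' (V : Term), E (.lam P) * F V * G P V W) ∨
  (∃ (N L : Term) (E F : PDist),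
      M = .choice N L ∧ R N E ∧ R L F ∧
      D = fun W => (E W * dsum F + F W * dsum E) / 2)

/-- The coinductive call-by-value big-step relation `⇓v`: the union of all
consistent relations between terms and distributions. -/
def BigV (M : Term) (D : PDist) : Prop :=
  ∃ R : Term → PDist → Prop,
    (∀ N E, R N E → IsDist E ∧ BigVStep R N E) ∧ R M D

/-- One-step unfolding of the call-by-name big-step inference system. -/
def BigNStep (R : Term → PDist → Prop) (M : Term) (D : PDist) : Prop :=
  (M.IsValue ∧ D = dirac M) ∨
  (∃ (N L : Term) (E : PDist) (F : Term → PDist),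
      M = .app N L ∧ R N E ∧
      (∀ P, E (.lam P) ≠ 0 → R (P.subst 0 L) (F P)) ∧
      D = fun W => ∑' (P : Term), E (.lam P) * F P W) ∨
  (∃ (N L : Term) (E F : PDist),
      M = .choice N L ∧ R N E ∧ R L F ∧ D = fun W => (E W + F W) / 2)

/-- The coinductive call-by-name big-step relation `⇓n`. -/
def BigN (M : Term) (D : PDist) : Prop :=
  ∃ R : Term → PDist → Prop,
    (∀ N E, R N E → IsDist E ∧ BigNStep R N E) ∧ R M D

/-- Big-step semantics `⟪M⟫`: the pointwise infimum of all distributions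
derivable for `M` in a big-step system. -/
noncomputable def bigSemOf (B : Term → PDist → Prop) (M : Term) : PDist :=
  fun W => ⨅ (D : PDist) (_ : B M D), D W

theorem Term.closedUnder_mono {M : Term} : ∀ {n m : ℕ}, M.closedUnder n → n ≤ m → M.closedUnder m := by
  induction M with
  | var k => intro n m h hnm; simp only [Term.closedUnder] at *; omega
  | lam M ih => intro n m h hnm; exact ih (n := n + 1) (m := m + 1) h (by omega)
  | app M N ih1 ih2 => intro n m h hnm; exact ⟨ih1 h.1 hnm, ih2 h.2 hnm⟩
  | choice M N ih1 ih2 => intro n m h hnm; exact ⟨ih1 h.1 hnm, ih2 h.2 hnm⟩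

theorem Term.closedUnder_shift {M : Term} (d : ℕ) :
    ∀ {c : ℕ}, M.closedUnder c → (M.shift d c).closedUnder c := by
  induction M with
  | var k =>
    intro c h
    simp only [Term.closedUnder] at h
    simp only [Term.shift, h, if_true, Term.closedUnder]
  | lam M ih => intro c h; exact ih (c := c + 1) h
  | app M N ih1 ih2 => intro c h; exact ⟨ih1 h.1, ih2 h.2⟩
  | choice M N ih1 ih2 => intro c h; exact ⟨ih1 h.1, ih2 h.2⟩

theorem Term.closedUnder_subst {M N : Term} (hN : N.closedUnder 0) :
    ∀ {j : ℕ}, M.closedUnder (j + 1) → (M.subst j N).closedUnder j := by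
  induction M with
  | var k =>
    intro j h
    simp only [Term.closedUnder] at h
    simp only [Term.subst]
    split_ifs with h1 h2
    · exact Term.closedUnder_mono (Term.closedUnder_shift j hN) (Nat.zero_le _)
    · omega
    · simp only [Term.closedUnder]; omega
  | lam M ih => intro j h; exact ih (j := j + 1) h
  | app M N ih1 ih2 => intro c h; exact ⟨ih1 h.1, ih2 h.2⟩
  | choice M N ih1 ih2 => intro c h; exact ⟨ih1 h.1, ih2 h.2⟩

theorem RedN.closed {M : Term} {Ns : List Term} (h : RedN M Ns) :
    M.Closed → ∀ N ∈ Ns, N.Closed := by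
  induction h with
  | beta =>
    intro hM N hN
    rw [List.mem_singleton] at hN
    subst hN
    exact Term.closedUnder_subst hM.2 hM.1
  | choice =>
    intro hM N hN
    simp only [List.mem_cons, List.not_mem_nil, or_false] at hN
    rcases hN with rfl | rfl
    · exact hM.1
    · exact hM.2
  | appL h ih =>
    intro hM N hN
    obtain ⟨L, hL, rfl⟩ := List.mem_map.1 hN
    exact ⟨ih hM.1 L hL, hM.2⟩

theorem RedN.length_ne_zero {M : Term} {Ns : List Term} (h : RedN M Ns) : Ns.length ≠ 0 := by
  induction h with
  | beta => simp
  | choice => simp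
  | appL h ih => simpa using ih

theorem RedN.not_value {M : Term} {Ns : List Term} (h : RedN M Ns) : ¬ M.IsValue := by
  intro hv
  cases h <;> cases hv

theorem RedN.det {M : Term} {Ns : List Term} (h : RedN M Ns) :
    ∀ {Ns' : List Term}, RedN M Ns' → Ns = Ns' := by
  induction h with
  | beta =>
    intro Ns' h'
    cases h' with
    | beta => rfl
    | appL h => exact absurd (Term.IsValue.lam _) h.not_value
  | choice => intro Ns' h'; cases h'; rfl
  | appL h ih =>
    intro Ns' h'
    cases h' with
    | beta => exact absurd (Term.IsValue.lam _) h.not_value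
    | appL h' => rw [ih h']

theorem RedN.progress {M : Term} : M.Closed → M.IsValue ∨ ∃ Ns, RedN M Ns := by
  induction M with
  | var k => intro _; exact Or.inl (.var k)
  | lam M => intro _; exact Or.inl (.lam M)
  | choice M N => intro _; exact Or.inr ⟨_, .choice⟩
  | app M N ih =>
    intro h
    right
    rcases ih h.1 with hv | ⟨Ns, hNs⟩
    · cases hv with
      | var k => exact absurd h.1 (Nat.not_lt_zero k)
      | lam P => exact ⟨_, .beta⟩
    · exact ⟨_, .appL hNs⟩

theorem dsum_dirac (V : Term) : dsum (dirac V) = 1 := by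
  simp [dsum, dirac, tsum_ite_eq]

theorem dsum_avg {n : ℕ} (Ds : Fin n → PDist) :
    dsum (fun W => (∑ i, Ds i W) / (n : ℝ≥0∞)) = (∑ i, dsum (Ds i)) / (n : ℝ≥0∞) := by
  simp only [dsum, div_eq_mul_inv]
  rw [ENNReal.tsum_mul_right, Summable.tsum_finsetSum]
  intro i _
  exact ENNReal.summable

theorem avg_le_one {n : ℕ} (p : Fin n → ℝ≥0∞) (hp : ∀ i, p i ≤ 1) :
    (∑ i, p i) / (n : ℝ≥0∞) ≤ 1 := by
  calc (∑ i, p i) / (n : ℝ≥0∞) ≤ (∑ _i : Fin n, 1) / (n : ℝ≥0∞) := by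
        gcongr with i; exact hp i
    _ = (n : ℝ≥0∞) / n := by simp
    _ ≤ 1 := ENNReal.div_self_le_one

theorem SmallN.dsum_le {M : Term} {D : PDist} (h : Conv RedN M D) : dsum D ≤ 1 := by
  induction h with
  | bot M => simp [dsum, dzero]
  | val hv => exact (dsum_dirac _).le
  | step Ds hr hc ih => rw [dsum_avg]; exact avg_le_one _ ih

theorem SmallN.directed {M : Term} {D : PDist} (h : Conv RedN M D) :
    ∀ {E : PDist}, Conv RedN M E → ∃ F, Conv RedN M F ∧ D ≤ F ∧ E ≤ F := by
  induction h with
  | bot M => intro E hE; exact ⟨E, hE, fun W => zero_le, le_rfl⟩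
  | @val V hv =>
    intro E hE
    cases hE with
    | bot => exact ⟨_, .val hv, le_rfl, fun W => zero_le⟩
    | val _ => exact ⟨_, .val hv, le_rfl, le_rfl⟩
    | step Ds hr hc => exact absurd hv hr.not_value
  | @step M Ns Ds hr hc ih =>
    intro E hE
    cases hE with
    | bot => exact ⟨_, .step Ds hr hc, le_rfl, fun W => zero_le⟩
    | val hv => exact absurd hv hr.not_value
    | @step _ Ns' Es hr' hc' =>
      obtain rfl := hr.det hr'
      choose F hF h1 h2 using fun i => ih i (hc' i)
      refine ⟨_, .step F hr hF, fun W => ?_, fun W => ?_⟩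
      · exact ENNReal.div_le_div_right (Finset.sum_le_sum fun i _ => h1 i W) _
      · exact ENNReal.div_le_div_right (Finset.sum_le_sum fun i _ => h2 i W) _

theorem semN_eq (M : Term) (W : Term) :
    semN M W = ⨆ D : {D : PDist // Conv RedN M D}, D.1 W := by
  simp only [semN, semOf, SmallN]
  exact iSup_subtype'

theorem dsum_semN_le (M : Term) : dsum (semN M) ≤ 1 := by
  rw [dsum, ENNReal.tsum_eq_iSup_sum]
  refine iSup_le fun s => ?_
  simp only [semN_eq]
  rw [ENNReal.finsetSum_iSup]
  · refine iSup_le fun D => ?_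
    exact (ENNReal.sum_le_tsum s).trans (SmallN.dsum_le D.2)
  · intro D E
    obtain ⟨F, hF, h1, h2⟩ := SmallN.directed D.2 E.2
    exact ⟨⟨F, hF⟩, fun W => ⟨h1 W, h2 W⟩⟩

theorem semN_value {V : Term} (hv : V.IsValue) : 1 ≤ dsum (semN V) := by
  rw [← dsum_dirac V]
  refine ENNReal.tsum_le_tsum fun W => ?_
  rw [semN_eq]
  exact le_iSup (fun D : {D : PDist // Conv RedN V D} => D.1 W) ⟨dirac V, .val hv⟩

theorem semN_step {M : Term} {Ns : List Term} (hr : RedN M Ns) :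
    semN M = fun W => (∑ i, semN (Ns.get i) W) / (Ns.length : ℝ≥0∞) := by
  funext W
  apply le_antisymm
  · rw [semN_eq]
    refine iSup_le fun ⟨D, hD⟩ => ?_
    cases hD with
    | bot => exact zero_le
    | val hv => exact absurd hv hr.not_value
    | @step _ Ns' Ds hr' hc =>
      obtain rfl := hr.det hr'
      refine ENNReal.div_le_div_right (Finset.sum_le_sum fun i _ => ?_) _
      rw [semN_eq]
      exact le_iSup (fun D : {D : PDist // Conv RedN (Ns.get i) D} => D.1 W) ⟨Ds i, hc i⟩
  · have key : ∀ i : Fin Ns.length, semN (Ns.get i) W =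
        ⨆ g : (∀ i : Fin Ns.length, {D : PDist // Conv RedN (Ns.get i) D}), (g i).1 W := by
      intro i
      rw [semN_eq]
      apply le_antisymm
      · refine iSup_le fun D => ?_
        refine le_iSup_of_le (Function.update (fun j => ⟨dzero, .bot _⟩) i D) ?_
        simp
      · exact iSup_le fun g =>
          le_iSup (fun D : {D : PDist // Conv RedN (Ns.get i) D} => D.1 W) (g i)
    rw [Finset.sum_congr rfl fun i _ => key i, ENNReal.finsetSum_iSup, ENNReal.iSup_div]
    · refine iSup_le fun g => ?_
      rw [semN_eq]
      exact le_iSup (fun D : {D : PDist // Conv RedN M D} => D.1 W)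
        ⟨_, .step (fun i => (g i).1) hr fun i => (g i).2⟩
    · intro g h
      choose F hF h1 h2 using fun i => SmallN.directed (g i).2 (h i).2
      exact ⟨fun i => ⟨F i, hF i⟩, fun i => ⟨h1 i W, h2 i W⟩⟩

theorem one_sub_avg {n : ℕ} (hn : n ≠ 0) (s : Fin n → ℝ≥0∞) (hs : ∀ i, s i ≤ 1) :
    1 - (∑ i, s i) / (n : ℝ≥0∞) = (∑ i, (1 - s i)) / (n : ℝ≥0∞) := by
  have hle := avg_le_one s hs
  symm
  refine ENNReal.eq_sub_of_add_eq (ne_top_of_le_ne_top ENNReal.one_ne_top hle) ?_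
  rw [← ENNReal.add_div, ← Finset.sum_add_distrib,
    Finset.sum_congr rfl fun i _ => tsub_add_cancel_of_le (hs i)]
  simp only [Finset.sum_const, Finset.card_univ, Fintype.card_fin, nsmul_eq_mul, mul_one]
  exact ENNReal.div_self (by exact_mod_cast hn) (ENNReal.natCast_ne_top n)

/-- `1` minus the total mass of the call-by-name small-step
semantics of `M` is a derivable call-by-name divergence probability for `M`. -/
theorem divN_one_sub_semN (M : Term) (hM : M.Closed) :
    DivN M (1 - dsum (semN M)) := by
  refine ⟨fun N q => N.Closed ∧ q = 1 - dsum (semN N), ?_, hM, rfl⟩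
  rintro N q ⟨hN, rfl⟩
  refine ⟨tsub_le_self, ?_⟩
  rcases RedN.progress hN with hv | ⟨Ns, hr⟩
  · exact Or.inl ⟨hv, tsub_eq_zero_of_le (semN_value hv)⟩
  · refine Or.inr ⟨Ns, fun i => 1 - dsum (semN (Ns.get i)), hr,
      fun i => ⟨hr.closed hN _ (List.get_mem Ns i), rfl⟩, ?_⟩
    rw [← one_sub_avg hr.length_ne_zero _ fun i => dsum_semN_le _, ← dsum_avg, ← semN_step hr]
end

section
/- For every closed term M of Λ⊕, if M ⇒n 𝒟 and M ⇓n ℰ, then 𝒟 ≤ ℰ: every distribution derivable in the inductive call-by-name small-step semantics is dominated by every distribution derivable in the coinductive call-by-name big-step semantics. -/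
open scoped ENNReal

theorem BigNStep.mono_rel {R S : Term → PDist → Prop} (h : ∀ M D, R M D → S M D)
    {M : Term} {D : PDist} (hs : BigNStep R M D) : BigNStep S M D := by
  rcases hs with hs | ⟨N, L, E, F, h1, h2, h3, h4⟩ | ⟨N, L, E, F, h1, h2, h3, h4⟩
  · exact Or.inl hs
  · exact Or.inr (Or.inl ⟨N, L, E, F, h1, h _ _ h2, fun P hP => h _ _ (h3 P hP), h4⟩)
  · exact Or.inr (Or.inr ⟨N, L, E, F, h1, h _ _ h2, h _ _ h3, h4⟩)

theorem BigN.unfold_step {M : Term} {D : PDist} (h : BigN M D) :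
    IsDist D ∧ BigNStep BigN M D := by
  obtain ⟨R, hR, hM⟩ := h
  obtain ⟨h1, h2⟩ := hR M D hM
  exact ⟨h1, h2.mono_rel (fun N E hN => ⟨R, hR, hN⟩)⟩

theorem BigN.fold_step {M : Term} {D : PDist} (h1 : IsDist D) (h2 : BigNStep BigN M D) :
    BigN M D := by
  refine ⟨fun N E => IsDist E ∧ BigNStep BigN N E, ?_, h1, h2⟩
  rintro N E ⟨ha, hb⟩
  exact ⟨ha, hb.mono_rel (fun _ _ h => h.unfold_step)⟩

theorem BigN.of_value {V : Term} (hV : V.IsValue) {D : PDist} (h : BigN V D) :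
    D = dirac V := by
  rcases h.unfold_step.2 with hs | ⟨N, L, E, F, h1, h2, h3, h4⟩ | ⟨N, L, E, F, h1, h2, h3, h4⟩
  · exact hs.2
  · subst h1; cases hV
  · subst h1; cases hV

/-- The application rule produces a genuine distribution. -/
theorem isDist_bind {E : PDist} (hE : IsDist E) {F : Term → PDist}
    (hF : ∀ P, E (.lam P) ≠ 0 → IsDist (F P)) :
    IsDist (fun W => ∑' (P : Term), E (.lam P) * F P W) := by
  constructor
  · intro W hW
    by_contra hv
    apply hW
    rw [ENNReal.tsum_eq_zero]
    intro P
    by_cases hP : E (.lam P) = 0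
    · simp [hP]
    · have : F P W = 0 := by
        by_contra h0
        exact hv ((hF P hP).1 W h0)
      simp [this]
  · unfold dsum
    rw [ENNReal.tsum_comm]
    calc ∑' (P : Term) (W : Term), E (.lam P) * F P W
        ≤ ∑' P : Term, E (.lam P) := by
          refine ENNReal.tsum_le_tsum (fun P => ?_)
          rw [ENNReal.tsum_mul_left]
          by_cases hP : E (.lam P) = 0
          · simp [hP]
          · exact mul_le_of_le_one_right' (hF P hP).2
      _ ≤ ∑' W : Term, E W :=
          ENNReal.tsum_comp_le_tsum_of_injective (f := Term.lam)
            (fun a b h => by injection h) E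
      _ ≤ 1 := hE.2

/-- Big-step evaluation is preserved by reduction. -/
theorem BigN.reduce {M : Term} {Ns : List Term} (hr : RedN M Ns) :
    ∀ {D : PDist}, BigN M D → ∃ Es : ℕ → PDist,
      (∀ (i : ℕ) (hi : i < Ns.length), BigN Ns[i] (Es i)) ∧
      ∀ W, D W = (∑ i ∈ Finset.range Ns.length, Es i W) / (Ns.length : ENNReal) := by
  induction hr with
  | @beta M N =>
    intro D h
    rcases h.unfold_step.2 with ⟨hs, _⟩ | ⟨N', L, E, F, h1, h2, h3, h4⟩ | ⟨N', L, E, F, h1, _⟩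
    · cases hs
    · injection h1 with ha hb
      subst ha hb
      have hE := h2.of_value (.lam M)
      subst hE
      refine ⟨fun _ => F M, ?_, ?_⟩
      · intro i hi
        simp only [List.length_singleton, Nat.lt_one_iff] at hi
        subst hi
        exact h3 M (by simp [dirac])
      · intro W
        subst h4
        simp only [List.length_singleton, Finset.range_one, Finset.sum_singleton,
          Nat.cast_one, div_one]
        rw [tsum_eq_single M]
        · simp [dirac]
        · intro P hP
          simp [dirac, hP]
    · cases h1
  | @choice M N =>
    intro D h
    rcases h.unfold_step.2 with ⟨hs, _⟩ | ⟨N', L, E, F, h1, _⟩ | ⟨N', L, E, F, h1, h2, h3, h4⟩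
    · cases hs
    · cases h1
    · injection h1 with ha hb
      subst ha hb
      refine ⟨fun i => if i = 0 then E else F, ?_, ?_⟩
      · intro i hi
        match i, hi with
        | 0, _ => simpa using h2
        | 1, _ => simpa using h3
      · intro W
        subst h4
        simp [Finset.sum_range_succ]
  | @appL M N Ls hr ih =>
    intro D h
    rcases h.unfold_step.2 with ⟨hs, _⟩ | ⟨N', L, E, F, h1, h2, h3, h4⟩ | ⟨N', L, E, F, h1, _⟩
    · cases hs
    · injection h1 with ha hb
      subst ha hb
      obtain ⟨Es, hEs, hsum⟩ := ih h2
      refine ⟨fun i W => ∑' P : Term, Es i (.lam P) * F P W, ?_, ?_⟩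
      · intro i hi
        have hi' : i < Ls.length := by simpa using hi
        have hsupp : ∀ P, Es i (.lam P) ≠ 0 → E (.lam P) ≠ 0 := by
          intro P hP h0
          rw [hsum, ENNReal.div_eq_zero_iff] at h0
          rcases h0 with h0 | h0
          · rw [Finset.sum_eq_zero_iff] at h0
            exact hP (h0 i (Finset.mem_range.2 hi'))
          · exact ENNReal.natCast_ne_top _ h0
        have hF : ∀ P, Es i (.lam P) ≠ 0 → BigN (P.subst 0 N) (F P) :=
          fun P hP => h3 P (hsupp P hP)
        refine BigN.fold_step
          (isDist_bind (hEs i hi').unfold_step.1 (fun P hP => (hF P hP).unfold_step.1)) ?_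
        exact Or.inr (Or.inl ⟨Ls[i], N, Es i, F, by simp, hEs i hi', hF, rfl⟩)
      · intro W
        subst h4
        simp only [List.length_map]
        rw [← Summable.tsum_finsetSum (fun _ _ => ENNReal.summable), div_eq_mul_inv,
          ← ENNReal.tsum_mul_right]
        refine tsum_congr (fun P => ?_)
        rw [hsum, ← Finset.sum_mul, div_eq_mul_inv]
        ring
    · cases h1

/-- big-step dominates small-step, call-by-name. -/
theorem bigN_dominates_smallN (M : Term) (hM : M.Closed) (D E : PDist)
    (hsmall : SmallN M D) (hbig : BigN M E) :
    D ≤ E := by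
  clear hM
  unfold SmallN at hsmall
  induction hsmall generalizing E with
  | bot M => exact fun W => zero_le
  | val hV => exact (hbig.of_value hV).ge
  | @step M Ns Ds hr _ ih =>
    obtain ⟨Es, hEs, hsum⟩ := BigN.reduce hr hbig
    intro W
    rw [hsum W, Finset.sum_range]
    exact ENNReal.div_le_div_right
      (Finset.sum_le_sum (fun i _ => ih i (Es i) (hEs i i.2) W)) _
end

section
/- For every closed term M of Λ⊕, the call-by-name big-step and small-step semantics coincide: ⟪M⟫n = ⟦M⟧n, where ⟪M⟫n is the pointwise infimum of all distributions 𝒟 with M ⇓n 𝒟 and ⟦M⟧n is the pointwise supremum of all distributions 𝒟 with M ⇒n 𝒟. -/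
open scoped ENNReal

/-! ### Auxiliary facts about `ℝ≥0∞` -/

theorem aux_tsum_iSup {α : Type*} (f : ℕ → α → ℝ≥0∞) (hf : ∀ a, Monotone fun n => f n a) :
    ∑' a, ⨆ n, f n a = ⨆ n, ∑' a, f n a := by
  simp only [ENNReal.tsum_eq_iSup_sum]
  rw [iSup_comm]
  refine iSup_congr fun s => ?_
  exact ENNReal.finsetSum_iSup_of_monotone (f := fun a n => f n a) hf

theorem aux_iSup_mul_iSup {u v : ℕ → ℝ≥0∞} (hu : Monotone u) (hv : Monotone v) :
    (⨆ n, u n) * (⨆ n, v n) = ⨆ n, u n * v n := by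
  apply le_antisymm
  · rw [ENNReal.iSup_mul]
    refine iSup_le fun i => ?_
    rw [ENNReal.mul_iSup]
    refine iSup_le fun j => ?_
    exact le_iSup_of_le (max i j) (mul_le_mul' (hu (le_max_left _ _)) (hv (le_max_right _ _)))
  · exact ENNReal.iSup_mul_le

theorem aux_list_mono {α : Type*} (Ls : List α) {f g : α → ℝ≥0∞} (h : ∀ a, f a ≤ g a) :
    (Ls.map f).sum ≤ (Ls.map g).sum := by
  induction Ls with
  | nil => simp
  | cons a l ih => simpa using add_le_add (h a) ih

theorem aux_list_iSup {α : Type*} (Ls : List α) (f : ℕ → α → ℝ≥0∞)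
    (hf : ∀ a, Monotone fun n => f n a) :
    (Ls.map fun L => ⨆ n, f n L).sum = ⨆ n, (Ls.map (f n)).sum := by
  induction Ls with
  | nil => simp
  | cons a l ih =>
    simp only [List.map_cons, List.sum_cons]
    rw [ih]
    exact ENNReal.iSup_add_iSup_of_monotone (hf a)
      (fun m n h => aux_list_mono l fun b => hf b h)

theorem aux_list_tsum {α β : Type*} (Ls : List α) (f : α → β → ℝ≥0∞) (X : β → ℝ≥0∞) (c : ℝ≥0∞) :
    ∑' P, (Ls.map fun L => f L P).sum / c * X P =
      (Ls.map fun L => ∑' P, f L P * X P).sum / c := by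
  have h : ∑' P, (Ls.map fun L => f L P).sum * X P =
      (Ls.map fun L => ∑' P, f L P * X P).sum := by
    induction Ls with
    | nil => simp
    | cons a l ih => simp only [List.map_cons, List.sum_cons, add_mul, ENNReal.tsum_add, ih]
  rw [← h, div_eq_mul_inv, ← ENNReal.tsum_mul_right]
  refine tsum_congr fun P => ?_
  rw [div_eq_mul_inv]; ring

theorem aux_fin_sum (Ns : List Term) (f : Term → ℝ≥0∞) :
    ∑ i : Fin Ns.length, f (Ns.get i) = (Ns.map f).sum := by
  induction Ns with
  | nil => simp
  | cons a l ih =>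
    rw [List.map_cons, List.sum_cons, ← ih]
    exact Fin.sum_univ_succ (n := l.length) (fun i => f ((a :: l).get i))

theorem aux_dirac_tsum (M : Term) (X : Term → ℝ≥0∞) :
    ∑' P : Term, dirac (.lam M) (.lam P) * X P = X M := by
  rw [tsum_eq_single M]
  · simp [dirac]
  · intro P hP
    simp [dirac, hP]

/-! ### Big-step approximants -/

/-- Finite approximants of the big-step semantics. -/
noncomputable def bap : ℕ → Term → PDist
  | 0, _ => dzero
  | _ + 1, .var x => dirac (.var x)
  | _ + 1, .lam M => dirac (.lam M)
  | n + 1, .app N L => fun W => ∑' P : Term, bap n N (.lam P) * bap n (P.subst 0 L) W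
  | n + 1, .choice N L => fun W => (bap n N W + bap n L W) / 2

theorem bap_succ (n : ℕ) : ∀ M W, bap n M W ≤ bap (n + 1) M W := by
  induction n with
  | zero => intro M W; simp [bap, dzero]
  | succ n ih =>
    intro M W
    cases M with
    | var x => simp [bap]
    | lam M => simp [bap]
    | app N L =>
      rw [bap, bap]
      exact ENNReal.tsum_le_tsum fun P => mul_le_mul' (ih _ _) (ih _ _)
    | choice N L =>
      rw [bap, bap]
      exact ENNReal.div_le_div_right (add_le_add (ih _ _) (ih _ _)) _

theorem bap_mono (M W : Term) : Monotone fun n => bap n M W :=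
  monotone_nat_of_le_succ fun n => bap_succ n M W

/-- Limit of the big-step approximants. -/
noncomputable def bsem (M : Term) : PDist := fun W => ⨆ n, bap n M W

theorem bsem_shift (M W : Term) : bsem M W = ⨆ n, bap (n + 1) M W :=
  ((bap_mono M W).iSup_nat_add 1).symm

theorem bsem_lam (M : Term) : bsem (.lam M) = dirac (.lam M) := by
  funext W; rw [bsem_shift]; simp [bap]

theorem bsem_var (x : ℕ) : bsem (.var x) = dirac (.var x) := by
  funext W; rw [bsem_shift]; simp [bap]

theorem bsem_app (N L W : Term) :
    bsem (.app N L) W = ∑' P : Term, bsem N (.lam P) * bsem (P.subst 0 L) W := by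
  rw [bsem_shift]
  simp only [bap, bsem]
  rw [← aux_tsum_iSup]
  · exact tsum_congr fun P => (aux_iSup_mul_iSup (bap_mono _ _) (bap_mono _ _)).symm
  · intro P m n h
    exact mul_le_mul' (bap_mono _ _ h) (bap_mono _ _ h)

theorem bsem_choice (N L W : Term) :
    bsem (.choice N L) W = (bsem N W + bsem L W) / 2 := by
  rw [bsem_shift]
  simp only [bap, bsem]
  rw [ENNReal.iSup_add_iSup_of_monotone (bap_mono _ _) (bap_mono _ _), ENNReal.iSup_div]

theorem isDist_dirac {V : Term} (hV : V.IsValue) : IsDist (dirac V) := by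
  constructor
  · intro M hM
    by_cases h : M = V
    · rwa [h]
    · simp [dirac, h] at hM
  · simp [dsum, dirac]

theorem isDist_bap (n : ℕ) : ∀ M, IsDist (bap n M) := by
  induction n with
  | zero => intro M; exact ⟨fun M h => by simp [bap, dzero] at h, by simp [bap, dzero, dsum]⟩
  | succ n ih =>
    intro M
    cases M with
    | var x => rw [bap]; exact isDist_dirac (.var x)
    | lam M => rw [bap]; exact isDist_dirac (.lam M)
    | app N L =>
      rw [bap]
      constructor
      · intro W hW
        by_contra hc
        apply hW
        refine ENNReal.tsum_eq_zero.2 fun P => ?_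
        have : bap n (P.subst 0 L) W = 0 := by
          by_contra h0
          exact hc ((ih _).1 W h0)
        rw [this, mul_zero]
      · rw [dsum, ENNReal.tsum_comm]
        calc ∑' P : Term, ∑' W, bap n N (.lam P) * bap n (P.subst 0 L) W
            ≤ ∑' P : Term, bap n N (.lam P) := by
              refine ENNReal.tsum_le_tsum fun P => ?_
              rw [ENNReal.tsum_mul_left]
              exact mul_le_of_le_one_right' (ih _).2
          _ ≤ ∑' W, bap n N W :=
              ENNReal.tsum_comp_le_tsum_of_injective (fun a b h => by injection h) _
          _ ≤ 1 := (ih N).2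
    | choice N L =>
      rw [bap]
      constructor
      · intro W hW
        by_contra hc
        apply hW
        have h1 : bap n N W = 0 := by
          by_contra h0
          exact hc ((ih _).1 W h0)
        have h2 : bap n L W = 0 := by
          by_contra h0
          exact hc ((ih _).1 W h0)
        simp [h1, h2]
      · simp only [dsum, div_eq_mul_inv]
        rw [ENNReal.tsum_mul_right, ENNReal.tsum_add]
        calc _ ≤ ((1 : ℝ≥0∞) + 1) * 2⁻¹ :=
              mul_le_mul' (add_le_add (ih N).2 (ih L).2) le_rfl
          _ = 1 := by
              rw [one_add_one_eq_two]
              exact ENNReal.mul_inv_cancel (by simp) (by simp)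

theorem isDist_bsem (M : Term) : IsDist (bsem M) := by
  constructor
  · intro W hW
    by_contra hc
    apply hW
    refine ENNReal.iSup_eq_zero.2 fun n => ?_
    by_contra h0
    exact hc ((isDist_bap n M).1 W h0)
  · simp only [dsum, bsem]
    rw [aux_tsum_iSup _ (fun W => bap_mono M W)]
    exact iSup_le fun n => (isDist_bap n M).2

theorem bigN_bsem (M : Term) : BigN M (bsem M) := by
  refine ⟨fun N E => E = bsem N, ?_, rfl⟩
  rintro N _ rfl
  refine ⟨isDist_bsem N, ?_⟩
  cases N with
  | var x => exact Or.inl ⟨.var x, bsem_var x⟩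
  | lam M => exact Or.inl ⟨.lam M, bsem_lam M⟩
  | app N L =>
    exact Or.inr (Or.inl ⟨N, L, bsem N, fun P => bsem (P.subst 0 L), rfl, rfl,
      fun _ _ => rfl, funext fun W => bsem_app N L W⟩)
  | choice N L =>
    exact Or.inr (Or.inr ⟨N, L, bsem N, bsem L, rfl, rfl, rfl,
      funext fun W => bsem_choice N L W⟩)

theorem bap_le_big (R : Term → PDist → Prop)
    (hR : ∀ N E, R N E → IsDist E ∧ BigNStep R N E) (n : ℕ) :
    ∀ M D, R M D → ∀ W, bap n M W ≤ D W := by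
  induction n with
  | zero => intro M D _ W; simp [bap, dzero]
  | succ n ih =>
    intro M D hMD W
    rcases (hR M D hMD).2 with ⟨hv, rfl⟩ | ⟨N, L, E, F, rfl, hE, hF, rfl⟩ |
      ⟨N, L, E, F, rfl, hE, hF, rfl⟩
    · cases hv <;> simp [bap]
    · rw [bap]
      refine ENNReal.tsum_le_tsum fun P => ?_
      by_cases h0 : E (.lam P) = 0
      · have h1 : bap n N (.lam P) = 0 := le_antisymm (h0 ▸ ih N E hE (.lam P)) (zero_le)
        simp [h1]
      · exact mul_le_mul' (ih N E hE _) (ih _ _ (hF P h0) W)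
    · rw [bap]
      exact ENNReal.div_le_div_right (add_le_add (ih _ _ hE _) (ih _ _ hF _)) _

theorem bigSem_eq_bsem (M : Term) : bigSemOf BigN M = bsem M := by
  funext W
  apply le_antisymm
  · exact iInf₂_le (bsem M) (bigN_bsem M)
  · refine le_iInf₂ fun D hD => iSup_le fun n => ?_
    obtain ⟨R, hR, hM⟩ := hD
    exact bap_le_big R hR n M D hM W

theorem bsem_red {M : Term} {Ns : List Term} (h : RedN M Ns) :
    ∀ W, bsem M W = (Ns.map fun L => bsem L W).sum / (Ns.length : ℝ≥0∞) := by
  induction h with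
  | beta =>
    intro W
    rw [bsem_app, bsem_lam, aux_dirac_tsum]
    simp
  | choice =>
    intro W
    rw [bsem_choice]
    simp
  | @appL M N Ls _ ih =>
    intro W
    rw [bsem_app]
    simp only [ih]
    rw [aux_list_tsum]
    simp only [List.map_map, Function.comp_def, List.length_map, bsem_app]

theorem conv_le_bsem {M : Term} {D : PDist} (h : Conv RedN M D) : ∀ W, D W ≤ bsem M W := by
  induction h with
  | bot M => intro W; simp [dzero]
  | val hv =>
    intro W
    cases hv with
    | var x => rw [bsem_var]
    | lam M => rw [bsem_lam]
  | step Ds hr _ ih =>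
    intro W
    rw [bsem_red hr, ← aux_fin_sum]
    exact ENNReal.div_le_div_right (Finset.sum_le_sum fun i _ => ih i W) _

/-! ### Small-step approximants -/

/-- The list of one-step call-by-name reducts (empty when there is none). -/
def nstep : Term → List Term
  | .app (.lam M) N => [M.subst 0 N]
  | .app M N => (nstep M).map fun L => .app L N
  | .choice M N => [M, N]
  | _ => []

theorem nstep_red (M : Term) : nstep M ≠ [] → RedN M (nstep M) := by
  induction M with
  | var x => simp [nstep]
  | lam M => simp [nstep]
  | choice M N => intro _; exact .choice
  | app M N ih _ =>
    cases M with
    | var x => simp [nstep]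
    | lam M => intro _; exact .beta
    | app A B =>
      intro h
      rw [nstep] at h ⊢
      · exact .appL (ih (by simpa using h))
      all_goals simp
    | choice A B =>
      intro h
      exact .appL .choice

/-- Finite approximants of the small-step semantics. -/
noncomputable def sap : ℕ → Term → PDist
  | 0, _ => dzero
  | n + 1, M => if M.isVal then dirac M else
      fun W => ((nstep M).map fun L => sap n L W).sum / ((nstep M).length : ℝ≥0∞)

theorem sap_val (n : ℕ) {M : Term} (h : M.isVal = true) : sap (n + 1) M = dirac M := by
  rw [sap, if_pos h]

theorem sap_nval (n : ℕ) {M : Term} (h : M.isVal = false) (W : Term) : sap (n + 1) M W =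
    ((nstep M).map fun L => sap n L W).sum / ((nstep M).length : ℝ≥0∞) := by
  rw [sap, if_neg (by simp [h])]

theorem sap_succ (n : ℕ) : ∀ M W, sap n M W ≤ sap (n + 1) M W := by
  induction n with
  | zero => intro M W; simp [sap, dzero]
  | succ n ih =>
    intro M W
    cases h : M.isVal with
    | true => rw [sap_val _ h, sap_val _ h]
    | false =>
      rw [sap_nval _ h, sap_nval _ h]
      exact ENNReal.div_le_div_right (aux_list_mono _ fun L => ih L W) _

theorem sap_mono (M W : Term) : Monotone fun n => sap n M W :=
  monotone_nat_of_le_succ fun n => sap_succ n M W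

/-- Limit of the small-step approximants. -/
noncomputable def asem (M : Term) : PDist := fun W => ⨆ n, sap n M W

theorem asem_shift (M W : Term) : asem M W = ⨆ n, sap (n + 1) M W :=
  ((sap_mono M W).iSup_nat_add 1).symm

theorem asem_nval {M : Term} (h : M.isVal = false) (W : Term) : asem M W =
    ((nstep M).map fun L => asem L W).sum / ((nstep M).length : ℝ≥0∞) := by
  rw [asem_shift]
  simp only [sap_nval _ h, asem]
  rw [aux_list_iSup (nstep M) (fun n L => sap n L W) (fun L => sap_mono L W), ENNReal.iSup_div]

theorem asem_val {M : Term} (h : M.isVal = true) : asem M = dirac M := by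
  funext W
  rw [asem_shift]
  simp only [sap_val _ h, ciSup_const]

theorem sap_app (k : ℕ) : ∀ N L W,
    ∑' P : Term, sap k N (.lam P) * asem (P.subst 0 L) W ≤ asem (.app N L) W := by
  induction k with
  | zero => intro N L W; simp [sap, dzero]
  | succ k ih =>
    intro N L W
    have key : N.isVal = false →
        nstep (.app N L) = (nstep N).map (fun K => .app K L) →
        ∑' P : Term, sap (k + 1) N (.lam P) * asem (P.subst 0 L) W ≤ asem (.app N L) W := by
      intro hN hs
      simp only [sap_nval k hN]
      rw [aux_list_tsum, asem_nval rfl, hs]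
      simp only [List.map_map, Function.comp_def, List.length_map]
      exact ENNReal.div_le_div_right (aux_list_mono _ fun K => ih K L W) _
    cases N with
    | var x =>
      rw [sap_val _ rfl]
      simp [dirac]
    | lam M =>
      rw [sap_val _ rfl, aux_dirac_tsum, asem_nval (M := .app (.lam M) L) rfl]
      simp [nstep]
    | app A B =>
      apply key rfl
      rw [nstep]
      simp
    | choice A B =>
      apply key rfl
      rw [nstep]
      simp

theorem asem_app (N L W : Term) :
    ∑' P : Term, asem N (.lam P) * asem (P.subst 0 L) W ≤ asem (.app N L) W := by
  have : ∀ P : Term, asem N (.lam P) * asem (P.subst 0 L) W =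
      ⨆ n, sap n N (.lam P) * asem (P.subst 0 L) W := fun P => by
    conv_lhs => rw [asem]
    rw [ENNReal.iSup_mul]
  simp only [this]
  rw [aux_tsum_iSup (fun n (P : Term) => sap n N (.lam P) * asem (P.subst 0 L) W)
    (fun P m n h => mul_le_mul' (sap_mono _ _ h) le_rfl)]
  exact iSup_le fun n => sap_app n N L W

theorem bap_le_asem (n : ℕ) : ∀ M W, bap n M W ≤ asem M W := by
  induction n with
  | zero => intro M W; simp [bap, dzero]
  | succ n ih =>
    intro M W
    cases M with
    | var x => rw [bap, asem_val rfl]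
    | lam M => rw [bap, asem_val rfl]
    | app N L =>
      rw [bap]
      exact (ENNReal.tsum_le_tsum fun P => mul_le_mul' (ih _ _) (ih _ _)).trans (asem_app N L W)
    | choice N L =>
      rw [bap, asem_nval rfl]
      simpa [nstep] using ENNReal.div_le_div_right (add_le_add (ih N W) (ih L W)) 2

theorem sap_conv (n : ℕ) : ∀ M, Conv RedN M (sap n M) := by
  induction n with
  | zero => intro M; exact .bot M
  | succ n ih =>
    intro M
    cases h : M.isVal with
    | true =>
      rw [sap_val _ h]
      cases M with
      | var x => exact .val (.var x)
      | lam M => exact .val (.lam M)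
      | app A B => simp [Term.isVal] at h
      | choice A B => simp [Term.isVal] at h
    | false =>
      by_cases h0 : nstep M = []
      · have : sap (n + 1) M = dzero := by
          funext W
          rw [sap_nval _ h, h0]
          simp [dzero]
        rw [this]
        exact .bot M
      · have : sap (n + 1) M = fun W =>
            (∑ i, sap n ((nstep M).get i) W) / ((nstep M).length : ℝ≥0∞) := by
          funext W
          rw [sap_nval _ h, ← aux_fin_sum]
        rw [this]
        exact .step (fun i => sap n ((nstep M).get i)) (nstep_red M h0) fun i => ih _

/-- the call-by-name big-step and small-step semantics
coincide. -/
theorem bigSemN_eq_semN (M : Term) (hM : M.Closed) :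
    bigSemOf BigN M = semN M := by
  rw [bigSem_eq_bsem]
  funext W
  apply le_antisymm
  · refine iSup_le fun n => (bap_le_asem n M W).trans (iSup_le fun k => ?_)
    exact le_iSup₂_of_le (f := fun (D : PDist) (_ : SmallN M D) => D W) (sap k M) (sap_conv k M) le_rfl
  · exact iSup₂_le fun D hD => conv_le_bsem hD W
end

section
/- For every term M of Λ⊕, every value V and every variable x, the call-by-value CPS translation commutes with substitution: ⟨M⟩[Ψ(V)/x] = ⟨M[V/x]⟩. -/
open scoped ENNReal

open Term in
/-- The call-by-value CPS translation `⟨·⟩` of Plotkin, extended to binary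
choice (de Bruijn version; the continuation variables `ε, α, β, γ` of `Λ⊕⁺`
are rendered as the extra binders introduced by the translation). -/
def cps : Term → Term
  | .var n => .lam (.app (.var 0) (.var (n + 1)))
  | .lam M => .lam (.app (.var 0) (.lam (shift 1 1 (cps M))))
  | .app M N =>
      .lam (.app (shift 1 0 (cps M))
        (.lam (.app (shift 2 0 (cps N))
          (.lam (.app (.app (.var 1) (.var 0)) (.var 2))))))
  | .choice M N =>
      .lam (.app (shift 1 0 (cps M))
        (.lam (.app (shift 2 0 (cps N))
          (.lam (.app
            (.choice (.lam (.app (.var 0) (.var 2))) (.lam (.app (.var 0) (.var 1))))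
            (.var 2))))))

/-- The map `Ψ` on values: `Ψ(x) = x`, `Ψ(λx.M) = λx.⟨M⟩` (extended
structurally to all terms). -/
def psi : Term → Term
  | .var n => .var n
  | .lam M => .lam (cps M)
  | .app M N => .app (psi M) (psi N)
  | .choice M N => .choice (psi M) (psi N)

/-- The pushforward of a distribution along `Ψ`: `Ψ(𝒟)(W) = Σ_{V : Ψ(V)=W} 𝒟(V)`. -/
noncomputable def pushPsi (D : PDist) : PDist :=
  fun W => ∑' V : Term, if psi V = W then D V else 0

open Term in
/-- The call-by-name CPS translation `⌈·⌉` (de Bruijn version). -/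
def cpn : Term → Term
  | .var n => .var n
  | .lam M => .lam (.app (.var 0) (.lam (shift 1 1 (cpn M))))
  | .app M N =>
      .lam (.app (shift 1 0 (cpn M))
        (.lam (.app (.app (.var 0) (shift 2 0 (cpn N))) (.var 1))))
  | .choice M N =>
      .lam (.app
        (.choice (.lam (.app (shift 2 0 (cpn M)) (.var 0)))
                 (.lam (.app (shift 2 0 (cpn N)) (.var 0))))
        (.var 0))

/-- The map `Φ` on values: `Φ(x) = x(λy.y)`, `Φ(λx.M) = λx.⌈M⌉` (extended
structurally to all terms). -/
def phi : Term → Term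
  | .var n => .app (.var n) (.lam (.var 0))
  | .lam M => .lam (cpn M)
  | .app M N => .app (phi M) (phi N)
  | .choice M N => .choice (phi M) (phi N)

/-- The pushforward of a distribution along `Φ`. -/
noncomputable def pushPhi (D : PDist) : PDist :=
  fun W => ∑' V : Term, if phi V = W then D V else 0

open Term in
/-- Plotkin's infix operator `M : K` for the call-by-value CPS translation,
extended to binary choice. -/
def colonV : Term → Term → Term
  | .var n, K => .app K (psi (.var n))
  | .lam M, K => .app K (psi (.lam M))
  | .app L P, K =>
      if L.isVal then
        if P.isVal then .app (.app (psi L) (psi P)) K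
        else colonV P (.lam (.app (.app (shift 1 0 (psi L)) (.var 0)) (shift 1 0 K)))
      else
        colonV L (.lam (.app (shift 1 0 (cps P))
          (.lam (.app (.app (.var 1) (.var 0)) (shift 2 0 K)))))
  | .choice L P, K =>
      if L.isVal then
        if P.isVal then
          .app (.choice (.lam (.app (.var 0) (shift 1 0 (psi L))))
                        (.lam (.app (.var 0) (shift 1 0 (psi P))))) K
        else
          colonV P (.lam (.app
            (.choice (.lam (.app (.var 0) (shift 2 0 (psi L))))
                     (.lam (.app (.var 0) (.var 1))))
            (shift 1 0 K)))
      else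
        colonV L (.lam (.app (shift 1 0 (cps P))
          (.lam (.app
            (.choice (.lam (.app (.var 0) (.var 2))) (.lam (.app (.var 0) (.var 1))))
            (shift 2 0 K)))))

/-- A deterministic reduction step: a reduction whose right-hand side is a
one-element sequence. -/
def DetStepN (M N : Term) : Prop := RedN M [N]

/-- Scott numerals: `⌜0⌝ = λxy.x`, `⌜n+1⌝ = λxy.y⌜n⌝`. -/
def scott : ℕ → Term
  | 0 => .lam (.lam (.var 1))
  | n + 1 => .lam (.lam (.app (.var 0) (scott n)))

/-- The binary string (of length `n`) made of the first `n` digits of the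
binary expansion of `x ∈ [0,1]`. -/
noncomputable def binApprox (x : ℝ≥0∞) (n : ℕ) : List Bool :=
  (List.range n).map (fun i => decide (⌊x.toReal * 2 ^ (i + 1)⌋ % 2 = 1))

/-- A distribution `D : ℕ → [0,1]` is computable when its approximating
function `(a, n) ↦` first `n` binary digits of `D a` is computable. -/
def ComputableDist (D : ℕ → ℝ≥0∞) : Prop :=
  Computable fun p : ℕ × ℕ => binApprox (D p.1) p.2

theorem shift_comm (M : Term) (d d' c c' : ℕ) (h : c ≤ c') :
    (M.shift d' c).shift d (c' + d') = (M.shift d c').shift d' c := by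
  induction M generalizing c c' with
  | var n =>
    simp only [Term.shift]
    split_ifs <;> simp only [Term.shift] <;> split_ifs <;>
      first | rfl | omega | (congr 1; omega)
  | lam M ih =>
    have := ih (c + 1) (c' + 1) (by omega)
    simp only [Term.shift]
    rw [← this]; congr 2; omega
  | app M N ihM ihN => simp only [Term.shift, ihM c c' h, ihN c c' h]
  | choice M N ihM ihN => simp only [Term.shift, ihM c c' h, ihN c c' h]

theorem shift_add (M : Term) (d d' c c' : ℕ) (h : c ≤ c') (h' : c' ≤ c + d') :
    (M.shift d' c).shift d c' = M.shift (d' + d) c := by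
  induction M generalizing c c' with
  | var n =>
    simp only [Term.shift]
    split_ifs <;> simp only [Term.shift] <;> split_ifs <;>
      first | rfl | omega | (congr 1; omega)
  | lam M ih => simp only [Term.shift, ih (c + 1) (c' + 1) (by omega) (by omega)]
  | app M N ihM ihN => simp only [Term.shift, ihM c c' h h', ihN c c' h h']
  | choice M N ihM ihN => simp only [Term.shift, ihM c c' h h', ihN c c' h h']

theorem subst_shift (M N : Term) (d c j : ℕ) (h : c ≤ j) :
    (M.shift d c).subst (j + d) N = (M.subst j N).shift d c := by
  induction M generalizing c j with
  | var n =>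
    rcases lt_trichotomy n j with hn | hn | hn
    · have h1 : ¬ n = j := by omega
      have h2 : ¬ j < n := by omega
      simp only [Term.shift, Term.subst, h1, h2, if_false]
      split_ifs <;> simp only [Term.subst] <;> split_ifs <;> first | rfl | omega
    · subst hn
      have h1 : ¬ n < c := by omega
      simp only [Term.shift, Term.subst, h1, if_true, if_false]
      rw [shift_add _ _ _ _ _ (by omega) (by omega)]
    · have h1 : ¬ n = j := by omega
      have h2 : ¬ n < c := by omega
      have h3 : ¬ n - 1 < c := by omega
      have h4 : ¬ n + d = j + d := by omega
      have h5 : j + d < n + d := by omega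
      simp only [Term.shift, Term.subst, h1, h2, h3, h4, h5, hn, if_true, if_false]
      congr 1; omega
  | lam M ih =>
    have := ih (c + 1) (j + 1) (by omega)
    simp only [Term.shift, Term.subst]
    rw [← this]; congr 2; omega
  | app M L ihM ihN => simp only [Term.shift, Term.subst, ihM c j h, ihN c j h]
  | choice M L ihM ihN => simp only [Term.shift, Term.subst, ihM c j h, ihN c j h]

theorem cps_shift (M : Term) (d c : ℕ) : cps (M.shift d c) = (cps M).shift d c := by
  induction M generalizing c with
  | var n =>
    by_cases h : n < c
    · simp [Term.shift, cps, h]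
    · simp [Term.shift, cps, h]; omega
  | lam M ih =>
    have h := shift_comm (cps M) d 1 1 (c + 1) (by omega)
    simp [Term.shift, cps, ih, ← h]
  | app M N ihM ihN =>
    have h1 := shift_comm (cps M) d 1 0 c (by omega)
    have h2 := shift_comm (cps N) d 2 0 c (by omega)
    simp [Term.shift, cps, ihM, ihN, ← h1, ← h2]
  | choice M N ihM ihN =>
    have h1 := shift_comm (cps M) d 1 0 c (by omega)
    have h2 := shift_comm (cps N) d 2 0 c (by omega)
    simp [Term.shift, cps, ihM, ihN, ← h1, ← h2]

theorem cps_value (V : Term) (hV : V.IsValue) :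
    cps V = .lam (.app (.var 0) ((psi V).shift 1 0)) := by
  cases hV <;> simp [cps, psi, Term.shift]

/-- the call-by-value CPS translation commutes with
substitution of values: `⟨M⟩[Ψ(V)/x] = ⟨M[V/x]⟩`. -/
theorem cps_subst (M V : Term) (j : ℕ) (hV : V.IsValue) :
    (cps M).subst j (psi V) = cps (M.subst j V) := by
  induction M generalizing j with
  | var n =>
    rcases lt_trichotomy n j with hn | hn | hn
    · have h1 : ¬ n = j := by omega
      have h2 : ¬ j < n := by omega
      simp [Term.subst, cps, h1, h2]
    · subst hn
      have h := shift_add (psi V) n 1 0 1 (by omega) (by omega)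
      simp [Term.subst, cps, cps_shift, cps_value V hV, Term.shift, h, Nat.add_comm]
    · have h1 : ¬ n = j := by omega
      simp [Term.subst, cps, h1, hn]
      omega
  | lam M ih =>
    have h := subst_shift (cps M) (psi V) 1 1 (j + 1) (by omega)
    simp [Term.subst, cps, h, ih]
  | app M N ihM ihN =>
    have h1 := subst_shift (cps M) (psi V) 1 0 j (by omega)
    have h2 := subst_shift (cps N) (psi V) 2 0 j (by omega)
    simp [Term.subst, cps, h1, h2, ihM, ihN]
  | choice M N ihM ihN =>
    have h1 := subst_shift (cps M) (psi V) 1 0 j (by omega)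
    have h2 := subst_shift (cps N) (psi V) 2 0 j (by omega)
    simp [Term.subst, cps, h1, h2, ihM, ihN]
end

section
/- For every term M of Λ⊕ and every value K of Λ⊕⁺, ⟨M⟩K reduces to M : K by a finite sequence of deterministic call-by-name reduction steps (i.e., steps N ↦n L whose right-hand side is a one-element sequence). -/
open scoped ENNReal

theorem shift_zero_aux (M : Term) : ∀ c, Term.shift 0 c M = M := by
  induction M <;> intro c <;> simp_all [Term.shift]

theorem subst_shift_aux (M N : Term) : ∀ (d c j : ℕ), c ≤ j → j ≤ c + d →
    Term.subst (Term.shift (d + 1) c M) j N = Term.shift d c M := by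
  induction M with
  | var n =>
    intro d c j h1 h2
    by_cases h : n < c
    · have h3 : n ≠ j := by omega
      have h4 : ¬ j < n := by omega
      simp [Term.shift, Term.subst, h, h3, h4]
    · have h3 : n + (d + 1) ≠ j := by omega
      have h4 : j < n + (d + 1) := by omega
      simp only [Term.shift, Term.subst, h, h3, h4, if_true, if_false]
      rfl
  | lam M ih =>
    intro d c j h1 h2
    simp only [Term.shift, Term.subst]
    rw [ih d (c + 1) (j + 1) (by omega) (by omega)]
  | app M L ih1 ih2 =>
    intro d c j h1 h2
    simp only [Term.shift, Term.subst]
    rw [ih1 d c j h1 h2, ih2 d c j h1 h2]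
  | choice M L ih1 ih2 =>
    intro d c j h1 h2
    simp only [Term.shift, Term.subst]
    rw [ih1 d c j h1 h2, ih2 d c j h1 h2]

theorem subst_s10 (M N : Term) : Term.subst (Term.shift 1 0 M) 0 N = M := by
  rw [subst_shift_aux M N 0 0 0 (by omega) (by omega), shift_zero_aux]

theorem subst_s11 (M N : Term) : Term.subst (Term.shift 1 1 M) 1 N = M := by
  rw [subst_shift_aux M N 0 1 1 (by omega) (by omega), shift_zero_aux]

theorem subst_s20 (M N : Term) : Term.subst (Term.shift 2 0 M) 1 N = Term.shift 1 0 M :=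
  subst_shift_aux M N 1 0 1 (by omega) (by omega)

theorem beta_step {M N L : Term} (h : M.subst 0 N = L) :
    Relation.ReflTransGen DetStepN (.app (.lam M) N) L :=
  h ▸ Relation.ReflTransGen.single RedN.beta

theorem cps_value_s15 (V K : Term) (hV : V.isVal = true) :
    Relation.ReflTransGen DetStepN (.app (cps V) K) (.app K (psi V)) := by
  cases V with
  | var n =>
    apply beta_step
    simp [Term.subst, shift_zero_aux, psi]
  | lam M =>
    apply beta_step
    simp [Term.subst, shift_zero_aux, psi, subst_s11]
  | app M N => simp [Term.isVal] at hV
  | choice M N => simp [Term.isVal] at hV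

theorem cps_colon_all (M : Term) : ∀ K : Term,
    Relation.ReflTransGen DetStepN (.app (cps M) K) (colonV M K) := by
  induction M with
  | var n => intro K; exact cps_value_s15 _ K rfl
  | lam M ih => intro K; exact cps_value_s15 _ K rfl
  | app L P ihL ihP =>
    intro K
    have h0 : Relation.ReflTransGen DetStepN (.app (cps (.app L P)) K)
        (.app (cps L) (.lam (.app (Term.shift 1 0 (cps P))
          (.lam (.app (.app (.var 1) (.var 0)) (Term.shift 2 0 K)))))) := by
      apply beta_step
      simp [Term.subst, subst_s10, subst_s20]
    refine h0.trans ?_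
    by_cases hL : L.isVal = true
    · refine (cps_value_s15 L _ hL).trans ?_
      have h1 : Relation.ReflTransGen DetStepN
          (.app (.lam (.app (Term.shift 1 0 (cps P))
            (.lam (.app (.app (.var 1) (.var 0)) (Term.shift 2 0 K))))) (psi L))
          (.app (cps P)
            (.lam (.app (.app (Term.shift 1 0 (psi L)) (.var 0)) (Term.shift 1 0 K)))) := by
        apply beta_step
        simp [Term.subst, subst_s10, subst_s20]
      refine h1.trans ?_
      by_cases hP : P.isVal = true
      · refine (cps_value_s15 P _ hP).trans ?_
        apply beta_step
        simp [Term.subst, subst_s10, shift_zero_aux, colonV, hL, hP]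
      · simpa [colonV, hL, hP] using ihP _
    · simpa [colonV, hL] using ihL _
  | choice L P ihL ihP =>
    intro K
    have h0 : Relation.ReflTransGen DetStepN (.app (cps (.choice L P)) K)
        (.app (cps L) (.lam (.app (Term.shift 1 0 (cps P))
          (.lam (.app
            (.choice (.lam (.app (.var 0) (.var 2))) (.lam (.app (.var 0) (.var 1))))
            (Term.shift 2 0 K)))))) := by
      apply beta_step
      simp [Term.subst, subst_s10, subst_s20]
    refine h0.trans ?_
    by_cases hL : L.isVal = true
    · refine (cps_value_s15 L _ hL).trans ?_
      have h1 : Relation.ReflTransGen DetStepN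
          (.app (.lam (.app (Term.shift 1 0 (cps P))
            (.lam (.app
              (.choice (.lam (.app (.var 0) (.var 2))) (.lam (.app (.var 0) (.var 1))))
              (Term.shift 2 0 K))))) (psi L))
          (.app (cps P)
            (.lam (.app
              (.choice (.lam (.app (.var 0) (Term.shift 2 0 (psi L))))
                (.lam (.app (.var 0) (.var 1))))
              (Term.shift 1 0 K)))) := by
        apply beta_step
        simp [Term.subst, subst_s10, subst_s20]
      refine h1.trans ?_
      by_cases hP : P.isVal = true
      · refine (cps_value_s15 P _ hP).trans ?_
        apply beta_step
        simp [Term.subst, subst_s10, subst_s20, colonV, hL, hP]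
      · simpa [colonV, hL, hP] using ihP _
    · simpa [colonV, hL] using ihL _

/-- `⟨M⟩K` reduces to `M : K` by a finite sequence of
deterministic call-by-name steps. -/
theorem cps_app_red_colon (M K : Term) (hK : K.IsValue) :
    Relation.ReflTransGen DetStepN (.app (cps M) K) (colonV M K) := by
  exact cps_colon_all M K
end

section
/- For every closed term M of Λ⊕, Ψ(⟦M⟧v) = ⟦⟨M⟩(λx.x)⟧n: the pushforward along Ψ of the call-by-value small-step semantics of M equals the call-by-name small-step semantics of the CPS translation of M applied to the identity continuation. -/
open scoped ENNReal

namespace CpsSim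
open Term

theorem isVal_iff (M : Term) : M.isVal = true ↔ M.IsValue := by
  cases M with
  | var n => simp [isVal]; exact .var n
  | lam M => simp [isVal]; exact .lam M
  | app M N => simp [isVal]; intro h; cases h
  | choice M N => simp [isVal]; intro h; cases h

theorem redV_not_value {M : Term} {Ns} (h : RedV M Ns) : ¬ M.IsValue := by
  intro hv; cases h <;> cases hv

theorem redN_not_value {M : Term} {Ns} (h : RedN M Ns) : ¬ M.IsValue := by
  intro hv; cases h <;> cases hv

theorem redV_det {M : Term} {Ns Ns'} (h : RedV M Ns) (h' : RedV M Ns') : Ns = Ns' := by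
  induction h generalizing Ns' with
  | beta hv =>
    cases h' with
    | beta _ => rfl
    | appL h => exact absurd (IsValue.lam _) (redV_not_value h)
    | appR _ h => exact absurd hv (redV_not_value h)
  | choice hv hw =>
    cases h' with
    | choice _ _ => rfl
    | choiceL h => exact absurd hv (redV_not_value h)
    | choiceR _ h => exact absurd hw (redV_not_value h)
  | appL h ih =>
    cases h' with
    | beta _ => exact absurd (IsValue.lam _) (redV_not_value h)
    | appL h2 => rw [ih h2]
    | appR hv _ => exact absurd hv (redV_not_value h)
  | appR hv h ih =>
    cases h' with
    | beta hw => exact absurd hw (redV_not_value h)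
    | appL h2 => exact absurd hv (redV_not_value h2)
    | appR _ h2 => rw [ih h2]
  | choiceL h ih =>
    cases h' with
    | choice hv _ => exact absurd hv (redV_not_value h)
    | choiceL h2 => rw [ih h2]
    | choiceR hv _ => exact absurd hv (redV_not_value h)
  | choiceR hv h ih =>
    cases h' with
    | choice _ hw => exact absurd hw (redV_not_value h)
    | choiceL h2 => exact absurd hv (redV_not_value h2)
    | choiceR _ h2 => rw [ih h2]

theorem redN_det {M : Term} {Ns Ns'} (h : RedN M Ns) (h' : RedN M Ns') : Ns = Ns' := by
  induction h generalizing Ns' with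
  | beta =>
    cases h' with
    | beta => rfl
    | appL h => exact absurd (IsValue.lam _) (redN_not_value h)
  | choice => cases h'; rfl
  | appL h ih =>
    cases h' with
    | beta => exact absurd (IsValue.lam _) (redN_not_value h)
    | appL h2 => rw [ih h2]

/-! ### Generic step-indexed evaluation -/

/-- Average of a function over a list. -/
noncomputable def avg (f : Term → ℝ≥0∞) (Ns : List Term) : ℝ≥0∞ :=
  (Ns.map f).sum / (Ns.length : ℝ≥0∞)

theorem avg_fin (f : Term → ℝ≥0∞) (Ns : List Term) :
    avg f Ns = (∑ i : Fin Ns.length, f (Ns.get i)) / (Ns.length : ℝ≥0∞) := by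
  unfold avg
  congr 1
  rw [← List.sum_ofFn]
  congr 1
  apply List.ext_get <;> simp

theorem avg_mono {f g : Term → ℝ≥0∞} {Ns : List Term} (h : ∀ N ∈ Ns, f N ≤ g N) :
    avg f Ns ≤ avg g Ns :=
  ENNReal.div_le_div_right (List.sum_le_sum h) _

theorem avg_single (f : Term → ℝ≥0∞) (N : Term) : avg f [N] = f N := by simp [avg]

open Classical in
/-- Step-indexed evaluation. -/
noncomputable def eval (Red : Term → List Term → Prop) : ℕ → Term → PDist
  | 0, _ => fun _ => 0
  | k + 1, M => fun W =>
      if M.IsValue then dirac M W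
      else if h : ∃ Ns, Red M Ns then avg (fun N => eval Red k N W) h.choose else 0

structure Good (Red : Term → List Term → Prop) : Prop where
  det : ∀ {M Ns Ns'}, Red M Ns → Red M Ns' → Ns = Ns'
  nv : ∀ {M Ns}, Red M Ns → ¬ M.IsValue

theorem goodV : Good RedV := ⟨redV_det, redV_not_value⟩
theorem goodN : Good RedN := ⟨redN_det, redN_not_value⟩

variable {Red : Term → List Term → Prop}

theorem eval_val {M : Term} (h : M.IsValue) (k : ℕ) : eval Red (k + 1) M = dirac M := by
  funext W; simp [eval, h]

theorem eval_step (g : Good Red) {M : Term} {Ns} (h : Red M Ns) (k : ℕ) (W : Term) :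
    eval Red (k + 1) M W = avg (fun N => eval Red k N W) Ns := by
  have hex : ∃ Ns, Red M Ns := ⟨Ns, h⟩
  have : hex.choose = Ns := g.det hex.choose_spec h
  simp only [eval, g.nv h, if_false, dif_pos hex, this]

theorem eval_succ (k : ℕ) (M W : Term) : eval Red k M W ≤ eval Red (k + 1) M W := by
  induction k generalizing M with
  | zero => simp [eval]
  | succ k ih =>
    rw [eval, eval]
    split_ifs
    · exact le_rfl
    · exact avg_mono fun N _ => ih N
    · exact le_rfl

theorem eval_mono (M W : Term) : Monotone (fun k => eval Red k M W) :=
  monotone_nat_of_le_succ fun k => eval_succ k M W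

theorem eval_conv (k : ℕ) (M : Term) : Conv Red M (eval Red k M) := by
  induction k generalizing M with
  | zero => exact Conv.bot M
  | succ k ih =>
    by_cases hv : M.IsValue
    · rw [eval_val hv]; exact Conv.val hv
    · by_cases hex : ∃ Ns, Red M Ns
      · have : eval Red (k + 1) M = fun W =>
            (∑ i, eval Red k (hex.choose.get i) W) / (hex.choose.length : ℝ≥0∞) := by
          funext W
          rw [eval]; beta_reduce; rw [if_neg hv, dif_pos hex, avg_fin]
        rw [this]
        exact Conv.step _ hex.choose_spec fun i => ih _
      · have : eval Red (k + 1) M = dzero := by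
          funext W
          rw [eval]; beta_reduce; rw [if_neg hv, dif_neg hex]; rfl
        rw [this]; exact Conv.bot M

theorem conv_le (g : Good Red) {M : Term} {D : PDist} (h : Conv Red M D) :
    ∃ k, ∀ W, D W ≤ eval Red k M W := by
  induction h with
  | bot M => exact ⟨0, fun W => by simp [dzero]⟩
  | val hv => exact ⟨1, fun W => by rw [eval_val hv]⟩
  | @step M Ns Ds hr _ ih =>
    choose ks hks using ih
    refine ⟨Finset.univ.sup ks + 1, fun W => ?_⟩
    rw [eval_step g hr, avg_fin]
    refine ENNReal.div_le_div_right (Finset.sum_le_sum fun i _ => ?_) _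
    exact (hks i W).trans (eval_mono _ _ (Finset.le_sup (Finset.mem_univ i)))

theorem sem_eq (g : Good Red) (M W : Term) :
    semOf (Conv Red) M W = ⨆ k, eval Red k M W := by
  apply le_antisymm
  · refine iSup₂_le fun D hD => ?_
    obtain ⟨k, hk⟩ := conv_le g hD
    exact (hk W).trans (le_iSup (fun k => eval Red k M W) k)
  · exact iSup_le fun k => le_iSup₂_of_le (eval Red k M) (eval_conv k M) le_rfl

theorem sem_step (g : Good Red) {M : Term} {Ns} (h : Red M Ns) (W : Term) :
    semOf (Conv Red) M W = avg (fun N => semOf (Conv Red) N W) Ns := by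
  simp only [sem_eq g]
  rw [avg_fin, ENNReal.finsetSum_iSup_of_monotone (fun i => eval_mono _ _), ENNReal.iSup_div,
    ← (eval_mono M W).iSup_nat_add 1]
  congr 1
  funext k
  rw [eval_step g h, avg_fin]

theorem sem_val (g : Good Red) {M : Term} (h : M.IsValue) (W : Term) :
    semOf (Conv Red) M W = dirac M W := by
  rw [sem_eq g, ← (eval_mono M W).iSup_nat_add 1]
  simp [eval_val h]

/-! ### pushforward -/

theorem pushPsi_dirac (V : Term) : pushPsi (dirac V) = dirac (psi V) := by
  funext W
  unfold pushPsi
  rw [tsum_eq_single V]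
  · simp [dirac, eq_comm]
  · intro V' h; simp [dirac, h]

theorem pushPsi_mono {D E : PDist} (h : ∀ V, D V ≤ E V) (W : Term) :
    pushPsi D W ≤ pushPsi E W := by
  refine ENNReal.tsum_le_tsum fun V => ?_
  split_ifs
  · exact h V
  · exact le_rfl

theorem pushPsi_avg (F : Term → PDist) (Ns : List Term) (W : Term) :
    pushPsi (fun V => avg (fun N => F N V) Ns) W = avg (fun N => pushPsi (F N) W) Ns := by
  simp only [avg_fin, pushPsi, div_eq_mul_inv]
  rw [← Summable.tsum_finsetSum (fun _ _ => ENNReal.summable), ← ENNReal.tsum_mul_right]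
  congr 1
  funext V
  split_ifs <;> simp

theorem pushPsi_sem_le (M W : Term) (c : ℝ≥0∞)
    (h : ∀ k, pushPsi (eval RedV k M) W ≤ c) : pushPsi (semV M) W ≤ c := by
  unfold pushPsi
  rw [ENNReal.tsum_eq_iSup_sum]
  refine iSup_le fun s => ?_
  have : ∀ V, (if psi V = W then semV M V else 0)
      = ⨆ k, (if psi V = W then eval RedV k M V else 0) := by
    intro V
    split_ifs
    · exact sem_eq goodV M V
    · simp
  simp only [this]
  rw [ENNReal.finsetSum_iSup_of_monotone]
  · exact iSup_le fun k => (ENNReal.sum_le_tsum s).trans (h k)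
  · intro V a b hab
    dsimp only
    split_ifs
    · exact eval_mono M V hab
    · exact le_rfl

/-! ### Closed terms, shifts and substitutions -/

theorem closed_mono {M : Term} {n m : ℕ} (h : M.closedUnder n) (hnm : n ≤ m) :
    M.closedUnder m := by
  induction M generalizing n m with
  | var k => simp only [closedUnder] at *; omega
  | lam M ih => exact ih h (by omega)
  | app M N ih1 ih2 => exact ⟨ih1 h.1 hnm, ih2 h.2 hnm⟩
  | choice M N ih1 ih2 => exact ⟨ih1 h.1 hnm, ih2 h.2 hnm⟩

theorem shift_closed {M : Term} {n : ℕ} (h : M.closedUnder n) (d c : ℕ) (hc : n ≤ c) :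
    shift d c M = M := by
  induction M generalizing n c with
  | var k => simp only [closedUnder] at h; simp only [shift]; rw [if_pos (by omega)]
  | lam M ih => simp only [shift]; rw [ih h _ (by omega)]
  | app M N ih1 ih2 => simp only [shift]; rw [ih1 h.1 _ hc, ih2 h.2 _ hc]
  | choice M N ih1 ih2 => simp only [shift]; rw [ih1 h.1 _ hc, ih2 h.2 _ hc]

theorem subst_closed {M : Term} {n : ℕ} (h : M.closedUnder n) (j : ℕ) (N : Term) (hc : n ≤ j) :
    subst M j N = M := by
  induction M generalizing n j with
  | var k =>
    simp only [closedUnder] at h; simp only [subst]; rw [if_neg (by omega), if_neg (by omega)]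
  | lam M ih => simp only [subst]; rw [ih h _ (by omega)]
  | app M N ih1 ih2 => simp only [subst]; rw [ih1 h.1 _ hc, ih2 h.2 _ hc]
  | choice M N ih1 ih2 => simp only [subst]; rw [ih1 h.1 _ hc, ih2 h.2 _ hc]

theorem closed_shift {M : Term} {n : ℕ} (h : M.closedUnder n) (d c : ℕ) :
    (shift d c M).closedUnder (n + d) := by
  induction M generalizing n c with
  | var k =>
    simp only [closedUnder] at h; simp only [shift]; split_ifs <;> simp only [closedUnder] <;> omega
  | lam M ih =>
    simp only [shift, closedUnder]
    have := ih h (c + 1)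
    rwa [show n + d + 1 = n + 1 + d by omega]
  | app M N ih1 ih2 => exact ⟨ih1 h.1 c, ih2 h.2 c⟩
  | choice M N ih1 ih2 => exact ⟨ih1 h.1 c, ih2 h.2 c⟩

theorem closed_subst {M N : Term} {n : ℕ} (h : M.closedUnder (n + 1)) (hN : N.closedUnder 0)
    (j : ℕ) (hj : j ≤ n) : (subst M j N).closedUnder n := by
  induction M generalizing n j with
  | var k =>
    simp only [closedUnder] at h
    simp only [subst]
    split_ifs
    · rw [shift_closed hN _ _ le_rfl]; exact closed_mono hN (by omega)
    · simp only [closedUnder]; omega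
    · simp only [closedUnder]; omega
  | lam M ih => exact ih (n := n + 1) h (j + 1) (by omega)
  | app M N ih1 ih2 => exact ⟨ih1 h.1 j hj, ih2 h.2 j hj⟩
  | choice M N ih1 ih2 => exact ⟨ih1 h.1 j hj, ih2 h.2 j hj⟩

theorem closed_cps {M : Term} {n : ℕ} (h : M.closedUnder n) : (cps M).closedUnder n := by
  induction M generalizing n with
  | var k => simp only [closedUnder, cps] at *; omega
  | lam M ih =>
    simp only [cps, closedUnder]
    exact ⟨by omega, closed_shift (ih h) 1 1⟩
  | app M N ih1 ih2 =>
    simp only [cps, closedUnder]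
    exact ⟨closed_shift (ih1 h.1) 1 0, closed_shift (ih2 h.2) 2 0, by omega⟩
  | choice M N ih1 ih2 =>
    simp only [cps, closedUnder]
    exact ⟨closed_shift (ih1 h.1) 1 0, closed_shift (ih2 h.2) 2 0, by omega⟩

theorem closed_psi {M : Term} {n : ℕ} (h : M.closedUnder n) : (psi M).closedUnder n := by
  induction M generalizing n with
  | var k => exact h
  | lam M ih => exact closed_cps (M := M) h
  | app M N ih1 ih2 => exact ⟨ih1 h.1, ih2 h.2⟩
  | choice M N ih1 ih2 => exact ⟨ih1 h.1, ih2 h.2⟩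

theorem subst_shift {M N : Term} (hN : N.closedUnder 0) (d c j : ℕ) (hc : c ≤ j) :
    subst (shift d c M) (j + d) N = shift d c (subst M j N) := by
  induction M generalizing c j with
  | var k =>
    rcases lt_trichotomy k j with h | h | h
    · by_cases h2 : k < c
      · simp [shift, subst, h2, show k ≠ j by omega, show ¬ j < k by omega,
          show k ≠ j + d by omega, show ¬ j + d < k by omega]
      · simp [shift, subst, h2, show k ≠ j by omega, show ¬ j < k by omega]
    · subst h
      simp [shift, subst, show ¬ k < c by omega, shift_closed hN]
    · simp [shift, subst, show ¬ k < c by omega, show k ≠ j by omega, h,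
        show ¬ k - 1 < c by omega]
      omega
  | lam M ih =>
    simp only [shift, subst]
    rw [← ih (c + 1) (j + 1) (by omega), show j + d + 1 = j + 1 + d by omega]
  | app M L ih1 ih2 => simp only [shift, subst]; rw [ih1 _ _ hc, ih2 _ _ hc]
  | choice M L ih1 ih2 => simp only [shift, subst]; rw [ih1 _ _ hc, ih2 _ _ hc]

theorem cps_subst (P : Term) (hP : (lam P).closedUnder 0) (M : Term) (j : ℕ) :
    subst (cps M) j (psi (lam P)) = cps (subst M j (lam P)) := by
  have hpsi : (psi (lam P)).closedUnder 0 := closed_psi hP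
  induction M generalizing j with
  | var k =>
    rcases lt_trichotomy k j with h | h | h
    · simp [cps, subst, show k ≠ j by omega, show ¬ j < k by omega]
    · subst h
      simp only [cps, subst, if_true, shift_closed hpsi _ _ le_rfl, shift_closed hP _ _ le_rfl]
      simp only [psi]
      rw [shift_closed (closed_cps (M := P) (n := 1) hP) 1 1 le_rfl]
      simp
    · simp [cps, subst, show k ≠ j by omega, h]
      omega
  | lam M ih =>
    simp only [cps, subst]
    rw [← ih, ← subst_shift hpsi 1 1 (j + 1) (by omega)]
    simp
  | app M N ih1 ih2 =>
    simp only [cps, subst]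
    rw [← ih1, ← ih2, ← subst_shift hpsi 1 0 j (by omega), ← subst_shift hpsi 2 0 j (by omega)]
    simp
  | choice M N ih1 ih2 =>
    simp only [cps, subst]
    rw [← ih1, ← ih2, ← subst_shift hpsi 1 0 j (by omega), ← subst_shift hpsi 2 0 j (by omega)]
    simp

/-! ### Simulation -/

/-- Deterministic multi-step reduction. -/
abbrev Star : Term → Term → Prop := Relation.ReflTransGen DetStepN

theorem star_beta {M N P : Term} (h : M.subst 0 N = P) : Star (app (lam M) N) P := by
  subst h; exact Relation.ReflTransGen.single RedN.beta

theorem star_appL {M M' : Term} (N : Term) (h : Star M M') : Star (app M N) (app M' N) := by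
  induction h with
  | refl => exact .refl
  | tail _ h ih => exact ih.tail (RedN.appL (N := N) h)

theorem shift0 (M : Term) (h : M.closedUnder 0) (d c : ℕ) : shift d c M = M :=
  shift_closed h d c (Nat.zero_le _)

theorem subst0 (M : Term) (h : M.closedUnder 0) (j : ℕ) (N : Term) : subst M j N = M :=
  subst_closed h j N (Nat.zero_le _)

theorem colon_value {V K : Term} (h : V.IsValue) : colonV V K = app K (psi V) := by
  cases h <;> rfl

/-- continuation for the application, argument part -/
def kA2 (L K : Term) : Term := lam (app (app (psi L) (var 0)) K)
def kA1 (N K : Term) : Term := lam (app (cps N) (lam (app (app (var 1) (var 0)) K)))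
def kC2 (L K : Term) : Term :=
  lam (app (choice (lam (app (var 0) (psi L))) (lam (app (var 0) (var 1)))) K)
def kC1 (N K : Term) : Term :=
  lam (app (cps N)
    (lam (app (choice (lam (app (var 0) (var 2))) (lam (app (var 0) (var 1)))) K)))

theorem clA2 {L K : Term} (hL : L.closedUnder 0) (hK : K.closedUnder 0) :
    (kA2 L K).closedUnder 0 := by
  simp only [kA2, closedUnder]
  exact ⟨⟨closed_mono (closed_psi hL) (by omega), by omega⟩, closed_mono hK (by omega)⟩

theorem clA1 {L K : Term} (hL : L.closedUnder 0) (hK : K.closedUnder 0) :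
    (kA1 L K).closedUnder 0 := by
  simp only [kA1, closedUnder]
  exact ⟨closed_mono (closed_cps hL) (by omega), by omega, closed_mono hK (by omega)⟩

theorem clC2 {L K : Term} (hL : L.closedUnder 0) (hK : K.closedUnder 0) :
    (kC2 L K).closedUnder 0 := by
  simp only [kC2, closedUnder]
  exact ⟨⟨⟨by omega, closed_mono (closed_psi hL) (by omega)⟩, by omega⟩,
    closed_mono hK (by omega)⟩

theorem clC1 {L K : Term} (hL : L.closedUnder 0) (hK : K.closedUnder 0) :
    (kC1 L K).closedUnder 0 := by
  simp only [kC1, closedUnder]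
  exact ⟨closed_mono (closed_cps hL) (by omega), by omega, closed_mono hK (by omega)⟩

theorem colon_app1 {L N K : Term} (hN : N.closedUnder 0) (hK : K.closedUnder 0)
    (h : ¬ L.IsValue) : colonV (app L N) K = colonV L (kA1 N K) := by
  have : L.isVal = false := by rw [← Bool.not_eq_true, isVal_iff]; exact h
  simp [colonV, this, kA1, shift0 _ (closed_cps hN), shift0 _ hK]

theorem colon_app2 {L N K : Term} (hL : L.closedUnder 0) (hK : K.closedUnder 0)
    (h : L.IsValue) (h' : ¬ N.IsValue) : colonV (app L N) K = colonV N (kA2 L K) := by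
  have : N.isVal = false := by rw [← Bool.not_eq_true, isVal_iff]; exact h'
  simp [colonV, (isVal_iff _).2 h, this, kA2, shift0 _ (closed_psi hL), shift0 _ hK]

theorem colon_app3 {L N K : Term}
    (h : L.IsValue) (h' : N.IsValue) : colonV (app L N) K = app (app (psi L) (psi N)) K := by
  simp [colonV, (isVal_iff _).2 h, (isVal_iff _).2 h']

theorem colon_ch1 {L N K : Term} (hN : N.closedUnder 0) (hK : K.closedUnder 0)
    (h : ¬ L.IsValue) : colonV (choice L N) K = colonV L (kC1 N K) := by
  have : L.isVal = false := by rw [← Bool.not_eq_true, isVal_iff]; exact h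
  simp [colonV, this, kC1, shift0 _ (closed_cps hN), shift0 _ hK]

theorem colon_ch2 {L N K : Term} (hL : L.closedUnder 0) (hK : K.closedUnder 0)
    (h : L.IsValue) (h' : ¬ N.IsValue) : colonV (choice L N) K = colonV N (kC2 L K) := by
  have : N.isVal = false := by rw [← Bool.not_eq_true, isVal_iff]; exact h'
  simp [colonV, (isVal_iff _).2 h, this, kC2, shift0 _ (closed_psi hL), shift0 _ hK]

theorem colon_ch3 {L N K : Term} (hL : L.closedUnder 0) (hN : N.closedUnder 0)
    (h : L.IsValue) (h' : N.IsValue) : colonV (choice L N) K =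
      app (choice (lam (app (var 0) (psi L))) (lam (app (var 0) (psi N)))) K := by
  simp [colonV, (isVal_iff _).2 h, (isVal_iff _).2 h', shift0 _ (closed_psi hL),
    shift0 _ (closed_psi hN)]

theorem glueA2 {L N K : Term} (hL : L.closedUnder 0) (hN : N.closedUnder 0)
    (hK : K.closedUnder 0) (hv : L.IsValue) :
    Star (colonV N (kA2 L K)) (colonV (app L N) K) := by
  by_cases h' : N.IsValue
  · rw [colon_value h', colon_app3 hv h']
    apply star_beta
    simp [subst, subst0 _ (closed_psi hL), subst0 _ hK, shift0 _ (closed_psi hN)]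
  · rw [colon_app2 hL hK hv h']

theorem glueC2 {L N K : Term} (hL : L.closedUnder 0) (hN : N.closedUnder 0)
    (hK : K.closedUnder 0) (hv : L.IsValue) :
    Star (colonV N (kC2 L K)) (colonV (choice L N) K) := by
  by_cases h' : N.IsValue
  · rw [colon_value h', colon_ch3 hL hN hv h']
    apply star_beta
    simp [subst, subst0 _ (closed_psi hL), subst0 _ hK, shift0 _ (closed_psi hN)]
  · rw [colon_ch2 hL hK hv h']

theorem glueA1 {L N K : Term} (hL : L.closedUnder 0) (hN : N.closedUnder 0)
    (hK : K.closedUnder 0)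
    (A : ∀ K, K.closedUnder 0 → Star (app (cps N) K) (colonV N K)) :
    Star (colonV L (kA1 N K)) (colonV (app L N) K) := by
  by_cases hv : L.IsValue
  · rw [colon_value hv]
    refine Relation.ReflTransGen.trans (b := app (cps N) (kA2 L K)) ?_
      ((A _ (clA2 hL hK)).trans (glueA2 hL hN hK hv))
    apply star_beta
    simp [subst, kA2, subst0 _ (closed_cps hN), subst0 _ hK, shift0 _ (closed_psi hL)]
  · rw [colon_app1 hN hK hv]

theorem glueC1 {L N K : Term} (hL : L.closedUnder 0) (hN : N.closedUnder 0)
    (hK : K.closedUnder 0)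
    (A : ∀ K, K.closedUnder 0 → Star (app (cps N) K) (colonV N K)) :
    Star (colonV L (kC1 N K)) (colonV (choice L N) K) := by
  by_cases hv : L.IsValue
  · rw [colon_value hv]
    refine Relation.ReflTransGen.trans (b := app (cps N) (kC2 L K)) ?_
      ((A _ (clC2 hL hK)).trans (glueC2 hL hN hK hv))
    apply star_beta
    simp [subst, kC2, subst0 _ (closed_cps hN), subst0 _ hK, shift0 _ (closed_psi hL)]
  · rw [colon_ch1 hN hK hv]

theorem cps_star {M : Term} (hM : M.closedUnder 0) :
    ∀ K, K.closedUnder 0 → Star (app (cps M) K) (colonV M K) := by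
  induction M with
  | var n => simp [closedUnder] at hM
  | lam M ih =>
    intro K hK
    have h1 : (cps M).closedUnder 1 := closed_cps (M := M) hM
    apply star_beta
    simp [subst, colonV, psi, shift_closed h1, subst_closed h1, shift0 _ hK]
  | app M N ih1 ih2 =>
    intro K hK
    refine Relation.ReflTransGen.trans (b := app (cps M) (kA1 N K)) ?_
      ((ih1 hM.1 _ (clA1 hM.2 hK)).trans (glueA1 hM.1 hM.2 hK (ih2 hM.2)))
    apply star_beta
    simp [subst, kA1, subst0 _ (closed_cps hM.1), subst0 _ (closed_cps hM.2), shift0 _ hK,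
      shift0 _ (closed_cps hM.1), shift0 _ (closed_cps hM.2)]
  | choice M N ih1 ih2 =>
    intro K hK
    refine Relation.ReflTransGen.trans (b := app (cps M) (kC1 N K)) ?_
      ((ih1 hM.1 _ (clC1 hM.2 hK)).trans (glueC1 hM.1 hM.2 hK (ih2 hM.2)))
    apply star_beta
    simp [subst, kC1, subst0 _ (closed_cps hM.1), subst0 _ (closed_cps hM.2), shift0 _ hK,
      shift0 _ (closed_cps hM.1), shift0 _ (closed_cps hM.2)]

theorem redV_closed {M : Term} {Ns} (h : RedV M Ns) (hM : M.closedUnder 0) :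
    ∀ N ∈ Ns, N.closedUnder 0 := by
  induction h with
  | beta hv =>
    intro N hN
    simp only [List.mem_singleton] at hN
    subst hN
    exact closed_subst hM.1 hM.2 0 le_rfl
  | choice hv hw =>
    intro N hN
    simp only [List.mem_cons, List.not_mem_nil, or_false] at hN
    rcases hN with rfl | rfl
    · exact hM.1
    · exact hM.2
  | appL h ih =>
    intro N hN
    obtain ⟨L, hL, rfl⟩ := List.mem_map.1 hN
    exact ⟨ih hM.1 L hL, hM.2⟩
  | appR hv h ih =>
    intro N hN
    obtain ⟨L, hL, rfl⟩ := List.mem_map.1 hN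
    exact ⟨hM.1, ih hM.2 L hL⟩
  | choiceL h ih =>
    intro N hN
    obtain ⟨L, hL, rfl⟩ := List.mem_map.1 hN
    exact ⟨ih hM.1 L hL, hM.2⟩
  | choiceR hv h ih =>
    intro N hN
    obtain ⟨L, hL, rfl⟩ := List.mem_map.1 hN
    exact ⟨hM.1, ih hM.2 L hL⟩

theorem progress {M : Term} (hM : M.closedUnder 0) : M.IsValue ∨ ∃ Ns, RedV M Ns := by
  induction M with
  | var n => exact .inl (.var n)
  | lam M _ => exact .inl (.lam M)
  | app M N ih1 ih2 =>
    right
    rcases ih1 hM.1 with hv | ⟨Ns, h⟩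
    · rcases ih2 hM.2 with hw | ⟨Ns, h⟩
      · cases hv with
        | var n => simp [closedUnder] at hM
        | lam P => exact ⟨_, .beta hw⟩
      · exact ⟨_, .appR hv h⟩
    · exact ⟨_, .appL h⟩
  | choice M N ih1 ih2 =>
    right
    rcases ih1 hM.1 with hv | ⟨Ns, h⟩
    · rcases ih2 hM.2 with hw | ⟨Ns, h⟩
      · exact ⟨_, .choice hv hw⟩
      · exact ⟨_, .choiceR hv h⟩
    · exact ⟨_, .choiceL h⟩

/-- `P` reduces deterministically to a term reducing to a sequence, whose elements reduce
deterministically to the elements of `Ps`. -/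
def SimTo (P : Term) (Ps : List Term) : Prop :=
  ∃ P' Ps', Star P P' ∧ RedN P' Ps' ∧ List.Forall₂ Star Ps' Ps

theorem forall2_map {Ps Ns : List Term} {f g : Term → Term}
    (h : List.Forall₂ Star Ps (Ns.map f)) (hfg : ∀ N ∈ Ns, Star (f N) (g N)) :
    List.Forall₂ Star Ps (Ns.map g) := by
  induction Ns generalizing Ps with
  | nil => simpa using h
  | cons N Ns ih =>
    rw [List.map_cons] at h ⊢
    cases h with
    | cons h1 h2 =>
      exact .cons (h1.trans (hfg N (by simp))) (ih h2 fun N hN => hfg N (by simp [hN]))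

theorem simTo_map {P : Term} {Ns : List Term} {f g : Term → Term}
    (h : SimTo P (Ns.map f)) (hfg : ∀ N ∈ Ns, Star (f N) (g N)) : SimTo P (Ns.map g) := by
  obtain ⟨P', Ps', h1, h2, h3⟩ := h
  exact ⟨P', Ps', h1, h2, forall2_map h3 hfg⟩

theorem simulation {M : Term} {Ns} (h : RedV M Ns) (hM : M.closedUnder 0) :
    ∀ K, K.closedUnder 0 → SimTo (colonV M K) (Ns.map (fun N => colonV N K)) := by
  induction h with
  | @beta M V hv =>
    intro K hK
    rw [colon_app3 (.lam _) hv]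
    refine ⟨_, _, .refl, RedN.appL RedN.beta, ?_⟩
    have hs : (cps M).subst 0 (psi V) = cps (M.subst 0 V) := by
      cases hv with
      | var n => simp [closedUnder] at hM
      | lam P => exact cps_subst P hM.2 M 0
    simp only [List.map_cons, List.map_nil, hs]
    exact .cons (cps_star (closed_subst hM.1 hM.2 0 le_rfl) K hK) .nil
  | @choice V W hv hw =>
    intro K hK
    rw [colon_ch3 hM.1 hM.2 hv hw]
    refine ⟨_, _, .refl, RedN.appL RedN.choice, ?_⟩
    simp only [List.map_cons, List.map_nil, colon_value hv, colon_value hw]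
    refine .cons (star_beta ?_) (.cons (star_beta ?_) .nil)
    · simp [subst, subst0 _ (closed_psi hM.1), shift0 _ hK]
    · simp [subst, subst0 _ (closed_psi hM.2), shift0 _ hK]
  | @appL M N Ls h ih =>
    intro K hK
    rw [colon_app1 hM.2 hK (redV_not_value h), List.map_map]
    exact simTo_map (ih hM.1 _ (clA1 hM.2 hK)) fun L hL =>
      glueA1 (redV_closed h hM.1 L hL) hM.2 hK (cps_star hM.2)
  | @appR V M Ns hv h ih =>
    intro K hK
    rw [colon_app2 hM.1 hK hv (redV_not_value h), List.map_map]
    exact simTo_map (ih hM.2 _ (clA2 hM.1 hK)) fun L hL =>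
      glueA2 hM.1 (redV_closed h hM.2 L hL) hK hv
  | @choiceL M N Ls h ih =>
    intro K hK
    rw [colon_ch1 hM.2 hK (redV_not_value h), List.map_map]
    exact simTo_map (ih hM.1 _ (clC1 hM.2 hK)) fun L hL =>
      glueC1 (redV_closed h hM.1 L hL) hM.2 hK (cps_star hM.2)
  | @choiceR V M Ns hv h ih =>
    intro K hK
    rw [colon_ch2 hM.1 hK hv (redV_not_value h), List.map_map]
    exact simTo_map (ih hM.2 _ (clC2 hM.1 hK)) fun L hL =>
      glueC2 hM.1 (redV_closed h hM.2 L hL) hK hv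

/-! ### Main argument -/

theorem sem_star {P Q : Term} (h : Star P Q) (W : Term) : semN P W = semN Q W := by
  induction h with
  | refl => rfl
  | tail _ h ih =>
    rw [ih]
    exact (sem_step goodN h W).trans (avg_single _ _)

theorem eval_star {P Q : Term} (h : Star P Q) (k : ℕ) (W : Term) :
    eval RedN k P W ≤ eval RedN k Q W := by
  induction h with
  | refl => exact le_rfl
  | @tail Q R _ h ih =>
    refine ih.trans ((eval_succ k Q W).trans ?_)
    rw [eval_step goodN h, avg_single]

theorem avg_forall2 {f : Term → ℝ≥0∞} {Ps Qs : List Term}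
    (h : List.Forall₂ (fun P Q => f P ≤ f Q) Ps Qs) : avg f Ps ≤ avg f Qs := by
  unfold avg
  rw [h.length_eq]
  refine ENNReal.div_le_div_right ?_ _
  induction h with
  | nil => simp
  | cons h _ ih => simpa using add_le_add h ih

theorem avg_map (f : Term → ℝ≥0∞) (g : Term → Term) (Ns : List Term) :
    avg f (Ns.map g) = avg (fun N => f (g N)) Ns := by
  simp [avg, Function.comp_def]

/-- The identity continuation. -/
def idK : Term := lam (var 0)

theorem cl_id : idK.closedUnder 0 := by simp [idK, closedUnder]

theorem value_star {V : Term} (h : V.IsValue) (hV : V.closedUnder 0) :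
    Star (colonV V idK) (psi V) := by
  rw [colon_value h]
  apply star_beta
  simp [subst, shift0 _ (closed_psi hV)]

theorem psi_value {V : Term} (h : V.IsValue) : (psi V).IsValue := by
  cases h
  · exact .var _
  · exact .lam _

theorem le_dir (k : ℕ) {M : Term} (hM : M.closedUnder 0) (W : Term) :
    pushPsi (eval RedV k M) W ≤ semN (colonV M idK) W := by
  induction k generalizing M with
  | zero => simp [pushPsi, eval]
  | succ k ih =>
    rcases progress hM with hv | ⟨Ns, h⟩
    · rw [eval_val hv, pushPsi_dirac, sem_star (value_star hv hM)]
      exact (sem_val goodN (psi_value hv) W).ge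
    · have e : eval RedV (k + 1) M = fun V => avg (fun N => eval RedV k N V) Ns := by
        funext V; exact eval_step goodV h k V
      rw [e, pushPsi_avg]
      obtain ⟨P', Ps', h1, h2, h3⟩ := simulation h hM idK cl_id
      rw [sem_star h1]
      refine le_trans ?_ (sem_step goodN h2 W).ge
      refine le_trans (avg_mono fun N hN => ih (redV_closed h hM N hN)) ?_
      rw [← avg_map (fun P => semN P W)]
      exact avg_forall2 (h3.flip.imp fun P Q h => (sem_star h W).ge)

theorem ge_dir (k : ℕ) {M : Term} (hM : M.closedUnder 0) (W : Term) :
    eval RedN k (colonV M idK) W ≤ pushPsi (semV M) W := by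
  induction k generalizing M with
  | zero => simp [eval]
  | succ k ih =>
    rcases progress hM with hv | ⟨Ns, h⟩
    · refine (eval_star (value_star hv hM) _ W).trans ?_
      rw [eval_val (psi_value hv), ← pushPsi_dirac]
      exact pushPsi_mono (fun V => (sem_val goodV hv V).ge) W
    · obtain ⟨P', Ps', h1, h2, h3⟩ := simulation h hM idK cl_id
      refine (eval_star h1 _ W).trans ?_
      rw [eval_step goodN h2]
      refine (avg_forall2 (h3.imp fun P Q h => eval_star h k W)).trans ?_
      rw [avg_map]
      refine (avg_mono fun N hN => ih (redV_closed h hM N hN)).trans ?_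
      rw [← pushPsi_avg]
      exact pushPsi_mono (fun V => (sem_step goodV h V).ge) W

end CpsSim

/-- call-by-value is simulated by call-by-name through the CPS
translation: `Ψ(⟦M⟧v) = ⟦⟨M⟩(λx.x)⟧n`. -/
theorem cps_simulation_v_by_n (M : Term) (hM : M.Closed) :
    pushPsi (semV M) = semN (.app (cps M) (.lam (.var 0))) := by
  have hM' : M.closedUnder 0 := hM
  funext W
  have hs : semN (.app (cps M) (.lam (.var 0))) W = semN (colonV M CpsSim.idK) W :=
    CpsSim.sem_star (CpsSim.cps_star hM' CpsSim.idK CpsSim.cl_id) W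
  rw [hs]
  apply le_antisymm
  · exact CpsSim.pushPsi_sem_le M W _ fun k => CpsSim.le_dir k hM' W
  · refine le_trans (CpsSim.sem_eq CpsSim.goodN _ W).le ?_
    exact iSup_le fun k => CpsSim.ge_dir k hM' W
end

section
/- For every closed term M of Λ⊕, Φ(⟦M⟧n) = ⟦⌈M⌉(λx.x)⟧v: the pushforward along Φ of the call-by-name small-step semantics of M equals the call-by-value small-step semantics of the call-by-name CPS translation of M applied to the identity continuation. -/
open scoped ENNReal

namespace CpsAux
open Term

theorem shift_closed (M : Term) : ∀ (n d c : ℕ), closedUnder M n → n ≤ c → shift d c M = M := by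
  induction M with
  | var m => intro n d c h hc; simp only [closedUnder] at h; simp only [shift]; rw [if_pos (by omega)]
  | lam M ih => intro n d c h hc; simp only [shift]; rw [ih (n+1) d (c+1) h (by omega)]
  | app M N ih1 ih2 => intro n d c h hc; simp only [shift]; rw [ih1 n d c h.1 hc, ih2 n d c h.2 hc]
  | choice M N ih1 ih2 => intro n d c h hc; simp only [shift]; rw [ih1 n d c h.1 hc, ih2 n d c h.2 hc]

theorem subst_closed (M : Term) :
    ∀ (n j : ℕ) (N : Term), closedUnder M n → n ≤ j → subst M j N = M := by
  induction M with
  | var m =>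
    intro n j N h hc; simp only [closedUnder] at h; simp only [subst]
    rw [if_neg (by omega), if_neg (by omega)]
  | lam M ih => intro n j N h hc; simp only [subst]; rw [ih (n+1) (j+1) N h (by omega)]
  | app M N ih1 ih2 => intro n d c h hc; simp only [subst]; rw [ih1 n d c h.1 hc, ih2 n d c h.2 hc]
  | choice M N ih1 ih2 =>
    intro n d c h hc; simp only [subst]; rw [ih1 n d c h.1 hc, ih2 n d c h.2 hc]

theorem closedUnder_mono (M : Term) : ∀ (n m : ℕ), closedUnder M n → n ≤ m → closedUnder M m := by
  induction M with
  | var k => intro n m h hc; simp only [closedUnder] at *; omega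
  | lam M ih => intro n m h hc; exact ih (n+1) (m+1) h (by omega)
  | app M N ih1 ih2 => intro n m h hc; exact ⟨ih1 n m h.1 hc, ih2 n m h.2 hc⟩
  | choice M N ih1 ih2 => intro n m h hc; exact ⟨ih1 n m h.1 hc, ih2 n m h.2 hc⟩

theorem closedUnder_shift (M : Term) :
    ∀ (n k c : ℕ), closedUnder M n → closedUnder (shift k c M) (n + k) := by
  induction M with
  | var m => intro n k c h; simp only [closedUnder] at h; simp only [shift]; split <;> simp only [closedUnder] <;> omega
  | lam M ih =>
    intro n k c h; simp only [shift, closedUnder]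
    have := ih (n+1) k (c+1) h
    rwa [show n + 1 + k = n + k + 1 by omega] at this
  | app M N ih1 ih2 => intro n k c h; exact ⟨ih1 n k c h.1, ih2 n k c h.2⟩
  | choice M N ih1 ih2 => intro n k c h; exact ⟨ih1 n k c h.1, ih2 n k c h.2⟩

theorem closedUnder_subst (M : Term) (N : Term) (hN : closedUnder N 0) :
    ∀ (n j : ℕ), j ≤ n → closedUnder M (n+1) → closedUnder (subst M j N) n := by
  induction M with
  | var m =>
    intro n j hj h; simp only [closedUnder] at h; simp only [subst]
    rw [shift_closed N 0 j 0 hN le_rfl]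
    split
    · exact closedUnder_mono N 0 n hN (by omega)
    · split <;> simp only [closedUnder] <;> omega
  | lam M ih => intro n j hj h; exact ih (n+1) (j+1) (by omega) h
  | app M N ih1 ih2 => intro n k c h; exact ⟨ih1 n k c h.1, ih2 n k c h.2⟩
  | choice M N ih1 ih2 => intro n k c h; exact ⟨ih1 n k c h.1, ih2 n k c h.2⟩

theorem subst_shift (M : Term) (N : Term) (hN : closedUnder N 0) :
    ∀ (k i j : ℕ), i ≤ j → subst (shift k i M) (j + k) N = shift k i (subst M j N) := by
  induction M with
  | var m =>
    intro k i j hij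
    simp only [shift, subst]
    rw [shift_closed N 0 j 0 hN le_rfl]
    by_cases h1 : m < i
    · rw [if_pos h1, if_neg (by omega), if_neg (by omega)]
      simp only [subst, shift]
      rw [if_neg (by omega), if_neg (by omega), if_pos h1]
    · rw [if_neg h1]
      simp only [subst]
      rw [shift_closed N 0 (j+k) 0 hN le_rfl]
      by_cases h2 : m = j
      · rw [if_pos (by omega), if_pos h2, shift_closed N 0 k i hN (by omega)]
      · rw [if_neg (by omega), if_neg h2]
        by_cases h3 : j < m
        · rw [if_pos (by omega), if_pos h3]
          simp only [shift]
          rw [if_neg (by omega)]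
          congr 1; omega
        · rw [if_neg (by omega), if_neg h3]
          simp only [shift]
          rw [if_neg h1]
  | lam M ih =>
    intro k i j hij
    simp only [shift, subst]
    rw [← ih k (i+1) (j+1) (by omega), show j + k + 1 = j + 1 + k by omega]
  | app M N ih1 ih2 => intro k i j h; simp only [shift, subst]; rw [ih1 k i j h, ih2 k i j h]
  | choice M N ih1 ih2 => intro k i j h; simp only [shift, subst]; rw [ih1 k i j h, ih2 k i j h]

theorem closedUnder_cpn (M : Term) : ∀ n, closedUnder M n → closedUnder (cpn M) n := by
  induction M with
  | var m => intro n h; exact h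
  | lam M ih =>
    intro n h
    exact ⟨Nat.succ_pos n, closedUnder_shift _ _ 1 1 (ih _ h)⟩
  | app M N ih1 ih2 =>
    intro n h
    refine ⟨closedUnder_shift _ _ 1 0 (ih1 _ h.1), ⟨Nat.succ_pos _, closedUnder_shift _ _ 2 0 (ih2 _ h.2)⟩, ?_⟩
    simp [closedUnder]
  | choice M N ih1 ih2 =>
    intro n h
    refine ⟨⟨⟨closedUnder_shift _ _ 2 0 (ih1 _ h.1), Nat.succ_pos _⟩,
      ⟨closedUnder_shift _ _ 2 0 (ih2 _ h.2), Nat.succ_pos _⟩⟩, Nat.succ_pos _⟩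

theorem cpn_subst (M N : Term) (hN : closedUnder N 0) :
    ∀ j, cpn (subst M j N) = subst (cpn M) j (cpn N) := by
  have hN' := closedUnder_cpn N 0 hN
  induction M with
  | var m =>
    intro j
    simp only [subst, cpn]
    rw [shift_closed N 0 j 0 hN le_rfl, shift_closed _ 0 j 0 hN' le_rfl]
    split
    · rfl
    · split <;> rfl
  | lam M ih =>
    intro j
    simp only [subst, cpn]
    rw [ih, ← subst_shift _ _ hN' 1 1 (j+1) (by omega)]
    simp
  | app M L ih1 ih2 =>
    intro j
    simp only [subst, cpn]
    rw [ih1, ih2, ← subst_shift _ _ hN' 1 0 j (by omega), ← subst_shift _ _ hN' 2 0 j (by omega)]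
    simp
  | choice M L ih1 ih2 =>
    intro j
    simp only [subst, cpn]
    rw [ih1, ih2, ← subst_shift _ _ hN' 2 0 j (by omega), ← subst_shift _ _ hN' 2 0 j (by omega)]
    simp

theorem cpn_isValue (M : Term) : (cpn M).IsValue := by
  cases M <;> simp only [cpn] <;> constructor

theorem shift_inj (M : Term) : ∀ (d c : ℕ) (N : Term), shift d c M = shift d c N → M = N := by
  induction M with
  | var m =>
    intro d c N h
    cases N with
    | var k =>
      simp only [shift] at h
      congr 1
      split at h <;> split at h <;> simp only [Term.var.injEq] at h <;> omega
    | _ => simp only [shift] at h; split at h <;> cases h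
  | lam M ih =>
    intro d c N h
    cases N with
    | var k => simp only [shift] at h; split at h <;> cases h
    | lam N => simp only [shift, Term.lam.injEq] at h; rw [ih _ _ _ h]
    | _ => cases h
  | app M L ih1 ih2 =>
    intro d c N h
    cases N with
    | var k => simp only [shift] at h; split at h <;> cases h
    | app N K => simp only [shift, Term.app.injEq] at h; rw [ih1 _ _ _ h.1, ih2 _ _ _ h.2]
    | _ => cases h
  | choice M L ih1 ih2 =>
    intro d c N h
    cases N with
    | var k => simp only [shift] at h; split at h <;> cases h
    | choice N K => simp only [shift, Term.choice.injEq] at h; rw [ih1 _ _ _ h.1, ih2 _ _ _ h.2]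
    | _ => cases h

theorem shift_ne_var0 (M : Term) : shift 1 0 M ≠ var 0 := by
  cases M <;> simp [shift]

theorem cpn_inj (M : Term) : ∀ N, cpn M = cpn N → M = N := by
  induction M with
  | var m => intro N h; cases N <;> simp_all [cpn]
  | lam M ih =>
    intro N h
    cases N with
    | lam N =>
      simp only [cpn, Term.lam.injEq, Term.app.injEq, true_and] at h
      rw [ih _ (shift_inj _ _ _ _ h)]
    | app N K =>
      simp only [cpn, Term.lam.injEq, Term.app.injEq] at h
      exact absurd h.1.symm (shift_ne_var0 _)
    | _ => simp [cpn] at h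
  | app M L ih1 ih2 =>
    intro N h
    cases N with
    | lam N =>
      simp only [cpn, Term.lam.injEq, Term.app.injEq] at h
      exact absurd h.1 (shift_ne_var0 _)
    | app N K =>
      simp only [cpn, Term.lam.injEq, Term.app.injEq, true_and, and_true] at h
      rw [ih1 _ (shift_inj _ _ _ _ h.1), ih2 _ (shift_inj _ _ _ _ h.2)]
    | _ => simp [cpn] at h
  | choice M L ih1 ih2 =>
    intro N h
    cases N with
    | choice N K =>
      simp only [cpn, Term.lam.injEq, Term.app.injEq, Term.choice.injEq, and_true] at h
      rw [ih1 _ (shift_inj _ _ _ _ h.1), ih2 _ (shift_inj _ _ _ _ h.2)]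
    | _ => simp [cpn] at h

theorem phi_ne_var (M : Term) (n : ℕ) : phi M ≠ var n := by
  cases M <;> simp [phi]

theorem phi_inj (M : Term) : ∀ N, phi M = phi N → M = N := by
  induction M with
  | var m =>
    intro N h
    cases N with
    | var k => simpa [phi] using h
    | app N K =>
      simp only [phi, Term.app.injEq] at h
      exact absurd h.1.symm (phi_ne_var _ _)
    | _ => simp [phi] at h
  | lam M ih =>
    intro N h
    cases N with
    | lam N => simp only [phi, Term.lam.injEq] at h; rw [cpn_inj _ _ h]
    | _ => simp [phi] at h
  | app M L ih1 ih2 =>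
    intro N h
    cases N with
    | var k =>
      simp only [phi, Term.app.injEq] at h
      exact absurd h.1 (phi_ne_var _ _)
    | app N K => simp only [phi, Term.app.injEq] at h; rw [ih1 _ h.1, ih2 _ h.2]
    | _ => simp [phi] at h
  | choice M L ih1 ih2 =>
    intro N h
    cases N with
    | choice N K => simp only [phi, Term.choice.injEq] at h; rw [ih1 _ h.1, ih2 _ h.2]
    | _ => simp [phi] at h

theorem push_cases (W : Term) :
    (∃ V, phi V = W ∧ ∀ E, pushPhi E W = E V) ∨ ((∀ V, phi V ≠ W) ∧ ∀ E, pushPhi E W = 0) := by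
  by_cases h : ∃ V, phi V = W
  · left
    obtain ⟨V, hV⟩ := h
    refine ⟨V, hV, fun E => ?_⟩
    unfold pushPhi
    rw [tsum_eq_single V]
    · rw [if_pos hV]
    · intro V' hne
      rw [if_neg]
      intro h'
      exact hne (phi_inj _ _ (h'.trans hV.symm))
  · right
    push Not at h
    exact ⟨h, fun E => by simp [pushPhi, h]⟩

theorem redV_not_value {M : Term} {Ns : List Term} (h : RedV M Ns) : ¬ M.IsValue := by
  intro hv; cases hv <;> cases h

theorem redN_not_value {M : Term} {Ns : List Term} (h : RedN M Ns) : ¬ M.IsValue := by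
  intro hv; cases hv <;> cases h

theorem redN_det {M : Term} {Ns : List Term} (h : RedN M Ns) :
    ∀ Ns', RedN M Ns' → Ns = Ns' := by
  induction h with
  | beta =>
    intro Ns' h'
    cases h' with
    | beta => rfl
    | appL h => cases h
  | choice => intro Ns' h'; cases h'; rfl
  | appL h ih =>
    intro Ns' h'
    cases h' with
    | beta => cases h
    | appL h2 => rw [ih _ h2]

theorem redV_det {M : Term} {Ns : List Term} (h : RedV M Ns) :
    ∀ Ns', RedV M Ns' → Ns = Ns' := by
  induction h with
  | beta hv =>
    intro Ns' h'
    cases h' with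
    | beta => rfl
    | appL h => cases h
    | appR _ h => exact absurd hv (redV_not_value h)
  | choice h1 h2 =>
    intro Ns' h'
    cases h' with
    | choice => rfl
    | choiceL h => exact absurd h1 (redV_not_value h)
    | choiceR _ h => exact absurd h2 (redV_not_value h)
  | appL h ih =>
    intro Ns' h'
    cases h' with
    | beta => cases h
    | appL h2 => rw [ih _ h2]
    | appR hv _ => exact absurd hv (redV_not_value h)
  | appR hv h ih =>
    intro Ns' h'
    cases h' with
    | beta hv' => exact absurd hv' (redV_not_value h)
    | appL h2 => exact absurd hv (redV_not_value h2)
    | appR _ h2 => rw [ih _ h2]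
  | choiceL h ih =>
    intro Ns' h'
    cases h' with
    | choice h1 _ => exact absurd h1 (redV_not_value h)
    | choiceL h2 => rw [ih _ h2]
    | choiceR hv _ => exact absurd hv (redV_not_value h)
  | choiceR hv h ih =>
    intro Ns' h'
    cases h' with
    | choice _ h1 => exact absurd h1 (redV_not_value h)
    | choiceL h2 => exact absurd hv (redV_not_value h2)
    | choiceR _ h2 => rw [ih _ h2]

theorem sem_val {Red : Term → List Term → Prop} {V : Term} (h : V.IsValue) (W : Term) :
    dirac V W ≤ semOf (Conv Red) V W :=
  le_iSup₂_of_le (dirac V) (Conv.val h) le_rfl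

theorem sem_step1 {Red : Term → List Term → Prop} {M N : Term} (h : Red M [N]) (W : Term) :
    semOf (Conv Red) N W ≤ semOf (Conv Red) M W := by
  refine iSup₂_le fun D hD => ?_
  have := Conv.step (Red := Red) (Ns := [N]) (fun _ => D) h (fun i => by
    rw [Fin.fin_one_eq_zero i]; exact hD)
  refine le_iSup₂_of_le _ this ?_
  simp

theorem sem_step2 {Red : Term → List Term → Prop} {M N L : Term} (h : Red M [N, L]) (W : Term) :
    (semOf (Conv Red) N W + semOf (Conv Red) L W) / 2 ≤ semOf (Conv Red) M W := by
  rw [ENNReal.div_le_iff_le_mul (by simp) (by simp)]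
  refine ENNReal.biSup_add_biSup_le' ⟨_, Conv.bot N⟩ ⟨_, Conv.bot L⟩ fun D hD E hE => ?_
  rw [← ENNReal.div_le_iff_le_mul (by simp) (by simp)]
  have := Conv.step (Red := Red) (Ns := [N, L]) ![D, E] h (fun i => by
    match i with
    | ⟨0, _⟩ => exact hD
    | ⟨1, _⟩ => exact hE)
  refine le_iSup₂_of_le _ this ?_
  simp [Fin.sum_univ_two]

/-- Spine application. -/
def apps : Term → List Term → Term
  | M, [] => M
  | M, N :: S => apps (.app M N) S

/-- The continuation encoding a stack of arguments. -/
def kont : List Term → Term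
  | [] => .lam (.var 0)
  | N :: S => .lam (.app (.app (.var 0) (cpn N)) (kont S))

theorem kont_isValue (S : List Term) : (kont S).IsValue := by
  cases S <;> constructor

theorem redN_apps (S : List Term) : ∀ {M : Term} {Ls : List Term}, RedN M Ls →
    RedN (apps M S) (Ls.map (fun L => apps L S)) := by
  induction S with
  | nil => intro M Ls h; simpa [apps] using h
  | cons N S ih =>
    intro M Ls h
    have := ih (RedN.appL (N := N) h)
    simpa [apps, Function.comp_def] using this

def AllClosed (S : List Term) : Prop := ∀ N ∈ S, closedUnder N 0

theorem kont_closed (S : List Term) (h : AllClosed S) : closedUnder (kont S) 0 := by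
  induction S with
  | nil => simp [kont, closedUnder]
  | cons N S ih =>
    refine ⟨⟨Nat.succ_pos _, ?_⟩, ?_⟩
    · exact closedUnder_mono _ 0 _ (closedUnder_cpn _ _ (h N (by simp))) (by omega)
    · exact closedUnder_mono _ 0 _ (ih (fun L hL => h L (by simp [hL]))) (by omega)

/-- The simulation relation, with a rank that decreases along silent steps. -/
inductive Sim : ℕ → Term → Term → Prop
  | a (M : Term) (S : List Term) : closedUnder M 0 → AllClosed S →
      Sim (sizeOf M + 1) (.app (cpn M) (kont S)) (apps M S)
  | b (P : Term) (S : List Term) : closedUnder P 1 → AllClosed S →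
      Sim 1 (.app (kont S) (.lam (cpn P))) (apps (.lam P) S)
  | c (P N : Term) (S : List Term) : closedUnder P 1 → closedUnder N 0 → AllClosed S →
      Sim 0 (.app (.app (.lam (cpn P)) (cpn N)) (kont S)) (apps (.app (.lam P) N) S)
  | d (M N : Term) (S : List Term) : closedUnder M 0 → closedUnder N 0 → AllClosed S →
      Sim 0 (.app (.choice (.lam (.app (cpn M) (.var 0))) (.lam (.app (cpn N) (.var 0)))) (kont S))
        (apps (.choice M N) S)
  | e (M : Term) (S : List Term) : closedUnder M 0 → AllClosed S →
      Sim (sizeOf M + 2) (.app (.lam (.app (cpn M) (.var 0))) (kont S)) (apps M S)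
  | f (P : Term) : Sim 0 (.lam (cpn P)) (.lam P)

/-- The visible part of the simulation. -/
def Match (T M : Term) : Prop :=
  (M.IsValue ∧ T = phi M ∧ T.IsValue) ∨
  (∃ k T' M', RedV T [T'] ∧ RedN M [M'] ∧ Sim k T' M') ∨
  (∃ k₁ k₂ T₁ T₂ M₁ M₂, RedV T [T₁, T₂] ∧ RedN M [M₁, M₂] ∧ Sim k₁ T₁ M₁ ∧ Sim k₂ T₂ M₂)

theorem beta_eq {M V T : Term} (hV : V.IsValue) (h : M.subst 0 V = T) :
    RedV (.app (.lam M) V) [T] := h ▸ RedV.beta hV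

theorem progress {k : ℕ} {T M : Term} (h : Sim k T M) :
    Match T M ∨ ∃ k' T', k' < k ∧ RedV T [T'] ∧ Sim k' T' M := by
  cases h with
  | a M S hM hS =>
    right
    have hK := kont_closed S hS
    cases M with
    | var n => exact absurd hM (Nat.not_lt_zero n)
    | lam P =>
      refine ⟨_, _, ?_, beta_eq (kont_isValue S) ?_, Sim.b P S hM hS⟩
      · simp
      · have hP := closedUnder_cpn P 1 hM
        simp only [subst]
        rw [shift_closed _ 1 1 1 hP le_rfl, subst_closed _ 1 _ _ hP (by omega)]
        simp [shift_closed _ 0 0 0 hK le_rfl]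
    | app L N =>
      have hL := closedUnder_cpn L 0 hM.1
      have hN := closedUnder_cpn N 0 hM.2
      refine ⟨_, _, ?_, beta_eq (kont_isValue S) ?_, Sim.a L (N :: S) hM.1 ?_⟩
      · simp; omega
      · simp only [subst]
        rw [shift_closed _ 0 1 0 hL le_rfl, subst_closed _ 0 _ _ hL (by omega),
          shift_closed _ 0 2 0 hN le_rfl, subst_closed _ 0 _ _ hN (by omega)]
        simp [shift_closed _ 0 1 0 hK le_rfl, kont]
      · intro X hX
        rcases List.mem_cons.1 hX with rfl | h
        · exact hM.2
        · exact hS _ h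
    | choice L N =>
      have hL := closedUnder_cpn L 0 hM.1
      have hN := closedUnder_cpn N 0 hM.2
      refine ⟨_, _, ?_, beta_eq (kont_isValue S) ?_, Sim.d L N S hM.1 hM.2 hS⟩
      · simp
      · simp only [subst]
        rw [shift_closed _ 0 2 0 hL le_rfl, subst_closed _ 0 _ _ hL (by omega),
          shift_closed _ 0 2 0 hN le_rfl, subst_closed _ 0 _ _ hN (by omega)]
        simp [shift_closed _ 0 0 0 hK le_rfl]
  | b P S hP hS =>
    right
    cases S with
    | nil =>
      refine ⟨_, _, Nat.zero_lt_one, beta_eq (.lam _) ?_, Sim.f P⟩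
      have hP' : closedUnder (.lam (cpn P)) 0 := closedUnder_cpn P 1 hP
      simp [subst, shift_closed _ 0 0 0 hP' le_rfl]
    | cons N S =>
      have hN : closedUnder N 0 := hS N (by simp)
      have hS' : AllClosed S := fun L hL => hS L (by simp [hL])
      refine ⟨_, _, Nat.zero_lt_one, beta_eq (.lam _) ?_, Sim.c P N S hP hN hS'⟩
      have hP' : closedUnder (.lam (cpn P)) 0 := closedUnder_cpn P 1 hP
      simp only [subst]
      rw [subst_closed _ 0 _ _ (closedUnder_cpn N 0 hN) le_rfl,
        subst_closed _ 0 _ _ (kont_closed S hS') le_rfl]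
      simp [shift_closed _ 0 0 0 hP' le_rfl]
  | c P N S hP hN hS =>
    left; right; left
    refine ⟨_, _, _, RedV.appL (beta_eq (cpn_isValue N) (cpn_subst P N hN 0).symm),
      redN_apps S RedN.beta, Sim.a _ S (closedUnder_subst P N hN 0 0 le_rfl hP) hS⟩
  | d M N S hM hN hS =>
    left; right; right
    exact ⟨_, _, _, _, _, _, RedV.appL (RedV.choice (.lam _) (.lam _)), redN_apps S RedN.choice,
      Sim.e M S hM hS, Sim.e N S hN hS⟩
  | e M S hM hS =>
    right
    refine ⟨_, _, ?_, beta_eq (kont_isValue S) ?_, Sim.a M S hM hS⟩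
    · omega
    · simp only [subst]
      rw [subst_closed _ 0 _ _ (closedUnder_cpn M 0 hM) le_rfl]
      simp [shift_closed _ 0 0 0 (kont_closed S hS) le_rfl]
  | f P => left; left; exact ⟨.lam _, rfl, .lam _⟩

theorem weak (k : ℕ) : ∀ {T M : Term}, Sim k T M →
    ∃ T', (∀ W, semV T' W ≤ semV T W) ∧ Match T' M := by
  induction k using Nat.strong_induction_on with
  | _ k ih =>
    intro T M h
    rcases progress h with h | ⟨k', T', hk, hr, hs⟩
    · exact ⟨T, fun _ => le_rfl, h⟩
    · obtain ⟨T'', h1, h2⟩ := ih k' hk hs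
      exact ⟨T'', fun W => (h1 W).trans (sem_step1 hr W), h2⟩

theorem n_le_v {M : Term} {D : PDist} (h : SmallN M D) :
    ∀ (k : ℕ) (T : Term), Sim k T M → ∀ V, D V ≤ semV T (phi V) := by
  unfold SmallN at h
  induction h with
  | bot M => intro k T _ V; simp [dzero]
  | val hv =>
    intro k T hs V
    obtain ⟨T', hle, hm⟩ := weak k hs
    refine le_trans ?_ (hle _)
    rcases hm with ⟨_, rfl, hT⟩ | ⟨_, _, _, _, h, _⟩ | ⟨_, _, _, _, _, _, _, h, _⟩
    · refine le_trans ?_ (sem_val hT _)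
      unfold dirac
      split
      · next h => rw [if_pos (by rw [h])]
      · simp
    · exact absurd hv (redN_not_value h)
    · exact absurd hv (redN_not_value h)
  | step Ds hr _ ih =>
    intro k T hs V
    obtain ⟨T', hle, hm⟩ := weak k hs
    refine le_trans ?_ (hle _)
    rcases hm with ⟨hv, _, _⟩ | ⟨k, T1, M1, h1, h2, h3⟩ | ⟨k1, k2, T1, T2, M1, M2, h1, h2, h3, h4⟩
    · exact absurd hv (redN_not_value hr)
    · obtain rfl := redN_det hr _ h2
      refine le_trans ?_ (sem_step1 h1 _)
      have := ih 0 k T1 h3 V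
      have e : semV T1 = semOf (Conv RedV) T1 := rfl
      rw [e] at this
      simpa using this
    · obtain rfl := redN_det hr _ h2
      refine le_trans ?_ (sem_step2 h1 _)
      have e1 := ih (0 : Fin 2) k1 T1 h3 V
      have e2 := ih (1 : Fin 2) k2 T2 h4 V
      have : (∑ i : Fin 2, Ds i V) / 2 ≤ (semV T1 (phi V) + semV T2 (phi V)) / 2 := by
        rw [Fin.sum_univ_two]
        exact ENNReal.div_le_div_right (add_le_add e1 e2) _
      exact this

theorem v_le_n {T : Term} {D : PDist} (h : SmallV T D) (W : Term) :
    ∀ (k : ℕ) (M : Term), Sim k T M → D W ≤ pushPhi (semN M) W := by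
  have F0 : ∀ V : Term, V.IsValue → dirac (phi V) W ≤ pushPhi (semN V) W := by
    intro V hV
    rcases push_cases W with ⟨U, hU, he⟩ | ⟨hn, he⟩
    · rw [he]
      refine le_trans ?_ (sem_val hV U)
      unfold dirac
      split
      · next h => rw [if_pos (phi_inj _ _ (hU.trans h))]
      · simp
    · unfold dirac
      rw [if_neg (fun h => hn V h.symm)]
      simp
  have F1 : ∀ M M' : Term, RedN M [M'] → pushPhi (semN M') W ≤ pushPhi (semN M) W := by
    intro M M' h
    rcases push_cases W with ⟨U, hU, he⟩ | ⟨hn, he⟩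
    · rw [he, he]; exact sem_step1 h U
    · rw [he, he]
  have F2 : ∀ M M₁ M₂ : Term, RedN M [M₁, M₂] →
      (pushPhi (semN M₁) W + pushPhi (semN M₂) W) / 2 ≤ pushPhi (semN M) W := by
    intro M M₁ M₂ h
    rcases push_cases W with ⟨U, hU, he⟩ | ⟨hn, he⟩
    · rw [he, he, he]; exact sem_step2 h U
    · rw [he, he, he]; simp
  unfold SmallV at h
  induction h with
  | bot M => intro k M' _; simp [dzero]
  | val hv =>
    intro k M hs
    rcases progress hs with (⟨hM, rfl, _⟩ | ⟨_, _, _, h, _⟩ | ⟨_, _, _, _, _, _, h, _⟩) | ⟨_, _, _, h, _⟩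
    · exact F0 M hM
    all_goals exact absurd hv (redV_not_value h)
  | step Ds hr _ ih =>
    intro k M hs
    rcases progress hs with (⟨_, _, hT⟩ | ⟨k1, T1, M1, h1, h2, h3⟩ |
      ⟨k1, k2, T1, T2, M1, M2, h1, h2, h3, h4⟩) | ⟨k1, T1, _, h1, h3⟩
    · exact absurd hT (redV_not_value hr)
    · obtain rfl := redV_det hr _ h1
      refine le_trans ?_ (F1 _ _ h2)
      have := ih 0 k1 M1 h3
      simpa using this
    · obtain rfl := redV_det hr _ h1
      refine le_trans ?_ (F2 _ _ _ h2)
      have e1 := ih (0 : Fin 2) k1 M1 h3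
      have e2 := ih (1 : Fin 2) k2 M2 h4
      have : (∑ i : Fin 2, Ds i W) / 2 ≤
          (pushPhi (semN M1) W + pushPhi (semN M2) W) / 2 := by
        rw [Fin.sum_univ_two]
        exact ENNReal.div_le_div_right (add_le_add e1 e2) _
      exact this
    · obtain rfl := redV_det hr _ h1
      have := ih 0 k1 M h3
      simpa using this

end CpsAux

/-- call-by-name is simulated by call-by-value through the CPS
translation: `Φ(⟦M⟧n) = ⟦⌈M⌉(λx.x)⟧v`. -/
theorem cps_simulation_n_by_v (M : Term) (hM : M.Closed) :
    pushPhi (semN M) = semV (.app (cpn M) (.lam (.var 0))) := by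
  have hs := CpsAux.Sim.a M [] hM (by intro N hN; simp at hN)
  simp only [CpsAux.apps, CpsAux.kont] at hs
  funext W
  apply le_antisymm
  · rcases CpsAux.push_cases W with ⟨U, rfl, he⟩ | ⟨_, he⟩
    · rw [he]
      exact iSup₂_le fun D hD => CpsAux.n_le_v hD _ _ hs U
    · rw [he]; simp
  · exact iSup₂_le fun D hD => CpsAux.v_le_n hD W _ _ hs
end
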